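/- arXiv:0901.4283 — 2 statements merged into one kernel-verified Lean document; each statement's English description precedes it below -/
import Mathlib

section
/- Let μ be the Haar probability measure on the compact group G = SU(2) × SU(2) × SU(2), and let φ : G → ℝ³ be the map sending (A, B, C) to its spectral invariants (p, q, r), where p = (det(A+B) − 2)/2, q = (det(A+C) − 2)/2, r = (det(B+C) − 2)/2 (these are real numbers). Then the pushforward measure φ∗μ equals the normalized Lebesgue measure on Δ, i.e. φ∗μ = (vol Δ)⁻¹ · (Lebesgue measure on ℝ³ restricted to Δ). -/
set_option autoImplicit false

open Matrix MeasureTheory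

/-- Borel σ-algebra on `2×2` complex matrices. -/
noncomputable instance : MeasurableSpace (Matrix (Fin 2) (Fin 2) ℂ) := borel _

instance : BorelSpace (Matrix (Fin 2) (Fin 2) ℂ) := ⟨rfl⟩

/-- The body `Δ ⊂ ℝ³`. -/
def DeltaBody : Set (ℝ × ℝ × ℝ) :=
  {x | -1 ≤ x.1 ∧ x.1 ≤ 1 ∧ -1 ≤ x.2.1 ∧ x.2.1 ≤ 1 ∧ -1 ≤ x.2.2 ∧ x.2.2 ≤ 1 ∧
    0 ≤ 1 - x.1 ^ 2 - x.2.1 ^ 2 - x.2.2 ^ 2 + 2 * x.1 * x.2.1 * x.2.2}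

/-- The map sending a triple `(A,B,C) ∈ SU(2)³` to its spectral invariants `(p,q,r)`,
`p = (det(A+B) − 2)/2`, `q = (det(A+C) − 2)/2`, `r = (det(B+C) − 2)/2`. -/
noncomputable def spectralInvariants
    (g : Matrix.specialUnitaryGroup (Fin 2) ℂ × Matrix.specialUnitaryGroup (Fin 2) ℂ ×
      Matrix.specialUnitaryGroup (Fin 2) ℂ) : ℝ × ℝ × ℝ :=
  (((Matrix.det ((g.1 : Matrix (Fin 2) (Fin 2) ℂ) + (g.2.1 : Matrix (Fin 2) (Fin 2) ℂ))).re - 2) / 2,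
   ((Matrix.det ((g.1 : Matrix (Fin 2) (Fin 2) ℂ) + (g.2.2 : Matrix (Fin 2) (Fin 2) ℂ))).re - 2) / 2,
   ((Matrix.det ((g.2.1 : Matrix (Fin 2) (Fin 2) ℂ) + (g.2.2 : Matrix (Fin 2) (Fin 2) ℂ))).re - 2) / 2)

/-!
The upper left entry of a Haar random matrix in `SU(2)` is uniformly distributed on the unit disc:
`SU(2)` preserves Lebesgue measure on the unit ball of `ℂ²` and acts transitively on directions.
Write `τ` for half the trace. The spectral invariants of `(A, B, C)` are `τ(A⁻¹B)`, `τ(A⁻¹C)` and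
`τ(B⁻¹C)`, so by invariance one may take `A = 1`. Given `B`, conjugate it to a diagonal matrix with
upper left entry `p + is`; if `x + iy` is the upper left entry of `C`, the invariants become
`(p, x, px + sy)`. As `x + iy` is uniform on the disc, `(x, px + sy)` is uniform on the slice of `Δ`
at height `p`, with density proportional to `1 / |s| = 1 / √(1 - p²)`. This cancels the semicircle
density `2 √(1 - p²) / π` of `p`, so the joint density is constant on `Δ`.
-/

open Metric ProbabilityTheory Set
open scoped ComplexConjugate ENNReal

section InvariantMeasure

variable {G : Type*} [Group G] [MeasurableSpace G] [MeasurableMul₂ G] [MeasurableInv G]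

lemma eq_of_isMulLeftInvariant (μ ν : Measure G) [IsProbabilityMeasure μ] [IsProbabilityMeasure ν]
    [μ.IsMulLeftInvariant] [ν.IsMulLeftInvariant] : μ = ν := by
  simpa using measure_eq_div_smul μ ν (s := univ) (by simp) (by simp)

lemma isMulRightInvariant_of_isMulLeftInvariant (μ : Measure G) [IsProbabilityMeasure μ]
    [μ.IsMulLeftInvariant] : μ.IsMulRightInvariant where
  map_mul_right_eq_self g :=
    have := Measure.isProbabilityMeasure_map (μ := μ) (measurable_mul_const g).aemeasurable
    eq_of_isMulLeftInvariant _ _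

lemma measurePreserving_conj (μ : Measure G) [IsProbabilityMeasure μ] [μ.IsMulLeftInvariant]
    (g : G) : MeasurePreserving (fun x ↦ g⁻¹ * x * g) μ μ :=
  have := isMulRightInvariant_of_isMulLeftInvariant μ
  (measurePreserving_mul_right μ g).comp (measurePreserving_mul_left μ g⁻¹)

end InvariantMeasure

lemma measurePreserving_mul_snd {α H : Type*} [MeasurableSpace α] [MeasurableSpace H] [Mul H]
    [MeasurableMul₂ H] (μ : Measure α) [IsProbabilityMeasure μ] (ν : Measure H) [SFinite ν]
    [ν.IsMulLeftInvariant] {f : α → H} (hf : Measurable f) :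
    MeasurePreserving (fun x : α × H ↦ f x.1 * x.2) (μ.prod ν) ν :=
  measurePreserving_snd.comp <| (MeasurePreserving.id μ).skew_product (g := fun a y ↦ f a * y)
    (by fun_prop) (.of_forall fun a ↦ map_mul_left_eq_self ν (f a))

lemma lintegral_eq_lintegral_lintegral_of_measurePreserving {G X : Type*} [MeasurableSpace G]
    [MeasurableSpace X] (η : Measure G) [IsProbabilityMeasure η] (ρ : Measure X) [SFinite ρ]
    {T : G → X → X} (hT : Measurable (Function.uncurry T)) (hTρ : ∀ g, MeasurePreserving (T g) ρ ρ)
    {f : X → ℝ≥0∞} (hf : Measurable f) :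
    ∫⁻ x, f x ∂ρ = ∫⁻ x, ∫⁻ g, f (T g x) ∂η ∂ρ := by
  rw [lintegral_lintegral_swap (by fun_prop)]
  simp [(hTρ _).lintegral_comp hf]

lemma eq_cond_of_eq_smul_restrict {Ω : Type*} [MeasurableSpace Ω] {μ ν : Measure Ω}
    [IsProbabilityMeasure ν] {s : Set Ω} {c : ℝ≥0∞} (h : ν = c • μ.restrict s) : ν = μ[|s] := by
  have hc : c * μ s = 1 := by simpa [h] using measure_univ (μ := ν)
  rw [h, ProbabilityTheory.cond, ENNReal.eq_inv_of_mul_eq_one_left hc]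

lemma setLIntegral_Ioi_comp_sq (h : ℝ → ℝ≥0∞) :
    ∫⁻ r in Ioi 0, ENNReal.ofReal (2 * r) * h (r ^ 2) = ∫⁻ t in Ioi 0, h t := by
  have himage : (fun r : ℝ ↦ r ^ 2) '' Ioi 0 = Ioi 0 := by
    ext t
    refine ⟨?_, fun ht ↦ ⟨√t, Real.sqrt_pos.2 ht, Real.sq_sqrt (le_of_lt ht)⟩⟩
    rintro ⟨r, hr, rfl⟩
    exact pow_pos (mem_Ioi.1 hr) 2
  have hderiv (r : ℝ) : HasDerivWithinAt (fun r : ℝ ↦ r ^ 2) (2 * r) (Ioi 0) r := by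
    simpa using (hasDerivAt_pow 2 r).hasDerivWithinAt
  have hmono : MonotoneOn (fun r : ℝ ↦ r ^ 2) (Ioi 0) := fun r hr s _ hrs ↦
    pow_le_pow_left₀ (le_of_lt hr) hrs 2
  rw [← lintegral_image_eq_lintegral_deriv_mul_of_monotoneOn measurableSet_Ioi
    (fun r _ ↦ hderiv r) hmono, himage]

lemma lintegral_comp_sq_norm {h : ℝ → ℝ≥0∞} (hh : Measurable h) :
    ∫⁻ w : ℂ, h (‖w‖ ^ 2) = ENNReal.ofReal Real.pi * ∫⁻ t in Ioi 0, h t := by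
  rw [← Complex.lintegral_comp_polarCoord_symm, polarCoord_target, Measure.volume_eq_prod,
    ← Measure.prod_restrict]
  simp only [Complex.norm_polarCoord_symm, sq_abs, smul_eq_mul]
  rw [lintegral_prod _ (by fun_prop), ← setLIntegral_Ioi_comp_sq h,
    ← lintegral_const_mul _ (by fun_prop)]
  refine lintegral_congr fun r ↦ ?_
  have hconst : ENNReal.ofReal r * ENNReal.ofReal (Real.pi - -Real.pi) =
      ENNReal.ofReal Real.pi * ENNReal.ofReal (2 * r) := by
    rw [← ENNReal.ofReal_mul' (by linarith [Real.pi_pos]), ← ENNReal.ofReal_mul Real.pi_pos.le]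
    ring_nf
  simp only [lintegral_const, Measure.restrict_apply_univ, Real.volume_Ioo]
  rw [mul_right_comm, hconst, mul_assoc]

lemma setLIntegral_ball_comp_div {F : ℂ → ℝ≥0∞} (hF : Measurable F) {r : ℝ} (hr : 0 < r) :
    ∫⁻ z in ball (0 : ℂ) r, F (z / r) = ENNReal.ofReal (r ^ 2) * ∫⁻ z in ball (0 : ℂ) 1, F z := by
  have hpre : (fun z : ℂ ↦ r⁻¹ • z) ⁻¹' ball 0 1 = ball 0 r := by
    ext z
    simp [abs_of_pos hr, inv_mul_lt_one₀ hr]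
  have hmap : Measure.map (r⁻¹ • ·) (volume : Measure ℂ) = ENNReal.ofReal (r ^ 2) • volume := by
    rw [Measure.map_addHaar_smul _ (inv_ne_zero hr.ne'), Complex.finrank_real_complex, inv_pow,
      inv_inv, abs_of_pos (by positivity)]
  rw [← smul_eq_mul, ← setLIntegral_smul_measure, ← hmap,
    setLIntegral_map measurableSet_ball hF (by fun_prop), hpre]
  simp [div_eq_inv_mul]

/-- Substituting `s = |z|² + |w|²` for `w`, through its squared modulus. -/
lemma lintegral_lintegral_comp_sq_norm_add_sq_norm {H : ℂ → ℝ → ℝ≥0∞}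
    (hH : Measurable (Function.uncurry H)) :
    ∫⁻ z : ℂ, ∫⁻ w : ℂ, H z (‖z‖ ^ 2 + ‖w‖ ^ 2) =
      ENNReal.ofReal Real.pi * ∫⁻ s : ℝ, ∫⁻ z in ball (0 : ℂ) √s, H z s := by
  have hmeas : MeasurableSet {x : ℂ × ℝ | ‖x.1‖ ^ 2 < x.2} :=
    measurableSet_lt (by fun_prop) (by fun_prop)
  have hshift (z : ℂ) : ∫⁻ t in Ioi 0, H z (‖z‖ ^ 2 + t) = ∫⁻ s in Ioi (‖z‖ ^ 2), H z s := by
    have := (measurePreserving_add_left volume (‖z‖ ^ 2)).setLIntegral_comp_preimage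
      (measurableSet_Ioi (a := ‖z‖ ^ 2)) (f := H z) (by fun_prop)
    rwa [preimage_const_add_Ioi, sub_self] at this
  have hball (s : ℝ) : ball (0 : ℂ) √s = {z : ℂ | ‖z‖ ^ 2 < s} := by
    ext z
    rw [mem_ball_zero_iff, Real.lt_sqrt (norm_nonneg z), mem_ofPred]
  calc
    _ = ∫⁻ z : ℂ, ENNReal.ofReal Real.pi * ∫⁻ s in Ioi (‖z‖ ^ 2), H z s :=
      lintegral_congr fun z ↦ by
        rw [lintegral_comp_sq_norm (h := fun t ↦ H z (‖z‖ ^ 2 + t)) (by fun_prop), hshift]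
    _ = ENNReal.ofReal Real.pi * ∫⁻ z : ℂ, ∫⁻ s : ℝ,
          {x : ℂ × ℝ | ‖x.1‖ ^ 2 < x.2}.indicator (Function.uncurry H) (z, s) := by
      rw [lintegral_const_mul' _ _ ENNReal.ofReal_ne_top]
      simp_rw [← lintegral_indicator measurableSet_Ioi]
      rfl
    _ = ENNReal.ofReal Real.pi * ∫⁻ s : ℝ, ∫⁻ z in ball (0 : ℂ) √s, H z s := by
      rw [lintegral_lintegral_swap (by exact (hH.indicator hmeas).aemeasurable)]
      simp_rw [← lintegral_indicator measurableSet_ball, hball]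
      rfl

lemma map_re_restrict_ball :
    (volume.restrict (ball (0 : ℂ) 1)).map Complex.re =
      volume.withDensity fun x : ℝ ↦ ENNReal.ofReal (2 * √(1 - x ^ 2)) := by
  have hslice (x : ℝ) :
      {y : ℝ | Complex.mk x y ∈ ball 0 1} = Ioo (-√(1 - x ^ 2)) √(1 - x ^ 2) := by
    ext y
    rw [mem_Ioo, ← abs_lt, Real.lt_sqrt (abs_nonneg y), sq_abs, mem_ofPred, mem_ball_zero_iff,
      ← sq_lt_one_iff₀ (norm_nonneg _), Complex.sq_norm, Complex.normSq_mk]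
    constructor <;> intro h <;> linarith
  ext S hS
  have hmeas : MeasurableSet (Complex.re ⁻¹' S ∩ ball 0 1) :=
    (Complex.measurable_re hS).inter measurableSet_ball
  rw [Measure.map_apply Complex.measurable_re hS, Measure.restrict_apply (Complex.measurable_re hS),
    withDensity_apply _ hS, ← lintegral_indicator hS,
    ← Complex.volume_preserving_equiv_real_prod.symm.measure_preimage_equiv,
    Measure.volume_eq_prod, Measure.prod_apply (hmeas.preimage (MeasurableEquiv.measurable _))]
  refine lintegral_congr fun x ↦ ?_
  have hsection : Prod.mk x ⁻¹' (Complex.measurableEquivRealProd.symm ⁻¹'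
      (Complex.re ⁻¹' S ∩ ball 0 1)) = {_y | x ∈ S} ∩ {y | Complex.mk x y ∈ ball 0 1} := rfl
  rw [hsection, hslice]
  by_cases hx : x ∈ S
  · simp [hx, two_mul]
  · simp [hx]

/-- The Euclidean unit ball of `ℂ²`, in the type `Fin 2 → ℂ` that carries Lebesgue measure but whose
own norm is the supremum norm. -/
def euclideanBall : Set (Fin 2 → ℂ) := WithLp.toLp 2 ⁻¹' ball 0 1

lemma isOpen_euclideanBall : IsOpen euclideanBall :=
  isOpen_ball.preimage (PiLp.continuous_toLp 2 _)

lemma volume_euclideanBall_ne_zero : volume euclideanBall ≠ 0 :=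
  (isOpen_euclideanBall.measure_pos volume ⟨0, by simp [euclideanBall]⟩).ne'

lemma volume_euclideanBall_ne_top : volume euclideanBall ≠ ⊤ := by
  refine ne_top_of_le_ne_top measure_closedBall_lt_top.ne (measure_mono fun x hx ↦ ?_)
    (b := volume (closedBall (0 : Fin 2 → ℂ) 1))
  have hx : ‖WithLp.toLp 2 x‖ < 1 := by simpa [euclideanBall] using hx
  rw [mem_closedBall_zero_iff, pi_norm_le_iff_of_nonneg zero_le_one]
  exact fun i ↦ (PiLp.norm_apply_le (WithLp.toLp 2 x) i).trans hx.le

lemma setLIntegral_euclideanBall_comp_div_norm {F : ℂ → ℝ≥0∞} (hF : Measurable F) :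
    ∫⁻ x in euclideanBall, F (x 0 / ‖WithLp.toLp 2 x‖) =
      (ENNReal.ofReal Real.pi * ∫⁻ s in Ioo (0 : ℝ) 1, ENNReal.ofReal s) *
        ∫⁻ z in ball (0 : ℂ) 1, F z := by
  set H : ℂ → ℝ → ℝ≥0∞ := fun z ↦ (Iio 1).indicator fun s ↦ F (z / √s)
  have hH : Measurable (Function.uncurry H) :=
    (show Measurable fun x : ℂ × ℝ ↦ F (x.1 / √x.2) by fun_prop).indicator
      (measurableSet_Iio.preimage measurable_snd)
  have hball (x : Fin 2 → ℂ) : euclideanBall.indicator (fun x ↦ F (x 0 / ‖WithLp.toLp 2 x‖)) x =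
      H (x 0) (‖x 0‖ ^ 2 + ‖x 1‖ ^ 2) := by
    have hmem : x ∈ euclideanBall ↔ ‖x 0‖ ^ 2 + ‖x 1‖ ^ 2 < 1 := by
      simp [euclideanBall, EuclideanSpace.norm_eq, Real.sqrt_lt' one_pos]
    simp [H, indicator, hmem, EuclideanSpace.norm_eq]
  have hslice (s : ℝ) : ∫⁻ z in ball (0 : ℂ) √s, H z s =
      (Ioo 0 1).indicator (fun s ↦ ENNReal.ofReal s * ∫⁻ z in ball (0 : ℂ) 1, F z) s := by
    rcases le_or_gt s 0 with hs₀ | hs₀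
    · simp [Real.sqrt_eq_zero_of_nonpos hs₀, hs₀.not_gt]
    rcases lt_or_ge s 1 with hs₁ | hs₁
    · simp [H, hs₀, hs₁, setLIntegral_ball_comp_div hF (Real.sqrt_pos.2 hs₀), Real.sq_sqrt hs₀.le]
    · simp [H, hs₁.not_gt]
  calc
    _ = ∫⁻ x : Fin 2 → ℂ, H (x 0) (‖x 0‖ ^ 2 + ‖x 1‖ ^ 2) := by
      rw [← lintegral_indicator isOpen_euclideanBall.measurableSet]
      exact lintegral_congr hball
    _ = ∫⁻ z : ℂ, ∫⁻ w : ℂ, H z (‖z‖ ^ 2 + ‖w‖ ^ 2) := by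
      rw [← lintegral_prod (fun x : ℂ × ℂ ↦ H x.1 (‖x.1‖ ^ 2 + ‖x.2‖ ^ 2)) (by fun_prop),
        ← Measure.volume_eq_prod, ← (volume_preserving_finTwoArrow ℂ).lintegral_comp (by fun_prop)]
      rfl
    _ = ENNReal.ofReal Real.pi * ∫⁻ s : ℝ, ∫⁻ z in ball (0 : ℂ) √s, H z s :=
      lintegral_lintegral_comp_sq_norm_add_sq_norm hH
    _ = _ := by
      simp_rw [hslice]
      rw [lintegral_indicator measurableSet_Ioo, lintegral_mul_const _ (by fun_prop), mul_assoc]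

lemma isClosed_deltaBody : IsClosed DeltaBody := by
  simp only [DeltaBody, ofPred_and]
  iterate 6 refine IsClosed.inter (isClosed_le (by fun_prop) (by fun_prop)) ?_
  exact isClosed_le (by fun_prop) (by fun_prop)

lemma mem_deltaBody_iff_of_sq_lt_one {p q r : ℝ} (hp : p ^ 2 < 1) :
    (p, q, r) ∈ DeltaBody ↔ 0 ≤ 1 - p ^ 2 - q ^ 2 - r ^ 2 + 2 * p * q * r := by
  refine ⟨fun h ↦ h.2.2.2.2.2.2, fun h ↦ ?_⟩
  have hq : q ^ 2 ≤ 1 := by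
    nlinarith [sq_nonneg (r - p * q)]
  have hr : r ^ 2 ≤ 1 := by
    nlinarith [sq_nonneg (q - p * r)]
  rw [sq_le_one_iff_abs_le_one, abs_le] at hq hr
  have hp := abs_le.1 ((sq_le_one_iff_abs_le_one p).1 hp.le)
  exact ⟨hp.1, hp.2, hq.1, hq.2, hr.1, hr.2, h⟩

lemma ball_ae_eq_closedBall {E : Type*} [NormedAddCommGroup E] [NormedSpace ℝ E]
    [FiniteDimensional ℝ E] [MeasurableSpace E] [BorelSpace E] (μ : Measure E) [μ.IsAddHaarMeasure]
    (x : E) {r : ℝ} (hr : r ≠ 0) : ball x r =ᵐ[μ] closedBall x r := by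
  rw [← ball_union_sphere]
  refine (union_ae_eq_left_of_ae_eq_empty ?_).symm
  exact ae_eq_empty.2 (Measure.addHaar_sphere_of_ne_zero μ x hr)

lemma measurePreserving_shear (p : ℝ) {s : ℝ} (hs : s ≠ 0) :
    MeasurePreserving (fun z : ℂ ↦ (z.re, p * z.re + s * z.im)) volume
      (ENNReal.ofReal |s⁻¹| • volume) := by
  have haffine (x : ℝ) : Measure.map (fun y ↦ p * x + s * y) volume =
      ENNReal.ofReal |s⁻¹| • (volume : Measure ℝ) :=
    calc
      _ = (volume.map (s * ·)).map (p * x + ·) := (Measure.map_map (by fun_prop) (by fun_prop)).symm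
      _ = _ := by rw [Real.map_volume_mul_left hs, Measure.map_smul, map_add_left_eq_self]
  have hreal := (MeasurePreserving.id (volume : Measure ℝ)).skew_product
    (g := fun x y ↦ p * x + s * y) (by fun_prop) (.of_forall haffine)
  rw [Measure.prod_smul_right] at hreal
  exact hreal.comp Complex.volume_preserving_equiv_real_prod

/-- The Jacobian `1 / |s|` of the shear does not depend on the point, so a slice of `Δ` carries the
uniform distribution. -/
lemma map_shear_restrict_ball {p s : ℝ} (hps : p ^ 2 + s ^ 2 = 1) (hs : s ≠ 0) :
    (volume.restrict (ball (0 : ℂ) 1)).map (fun z ↦ (z.re, p * z.re + s * z.im)) =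
      ENNReal.ofReal |s⁻¹| • volume.restrict (Prod.mk p ⁻¹' DeltaBody) := by
  have hp : p ^ 2 < 1 := by linarith [pow_pos (abs_pos.2 hs) 2, sq_abs s]
  have hpre : (fun z : ℂ ↦ (z.re, p * z.re + s * z.im)) ⁻¹' (Prod.mk p ⁻¹' DeltaBody) =
      closedBall 0 1 := by
    ext z
    have hgram : 1 - p ^ 2 - z.re ^ 2 - (p * z.re + s * z.im) ^ 2 +
        2 * p * z.re * (p * z.re + s * z.im) = s ^ 2 * (1 - (z.re * z.re + z.im * z.im)) := by
      linear_combination (z.re ^ 2 - 1) * hps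
    rw [mem_preimage, mem_preimage, mem_deltaBody_iff_of_sq_lt_one hp, hgram,
      mul_nonneg_iff_of_pos_left (by positivity), sub_nonneg, mem_closedBall_zero_iff,
      ← sq_le_one_iff₀ (norm_nonneg z), Complex.sq_norm, Complex.normSq_apply]
  have hslice : MeasurableSet (Prod.mk p ⁻¹' DeltaBody) :=
    isClosed_deltaBody.measurableSet.preimage measurable_prodMk_left
  rw [Measure.restrict_congr_set (ball_ae_eq_closedBall volume (0 : ℂ) one_ne_zero), ← hpre,
    ((measurePreserving_shear p hs).restrict_preimage hslice).map_eq, Measure.restrict_smul]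

/-- The semicircle density of `halfTrace A` cancels the Jacobian of the slice. -/
lemma ae_semicircle_mul_volume_slice {S : Set (ℝ × ℝ × ℝ)} (hS : S ⊆ DeltaBody) : ∀ᵐ p : ℝ,
    ENNReal.ofReal (2 * √(1 - p ^ 2)) * (ENNReal.ofReal (√(1 - p ^ 2))⁻¹ * volume (Prod.mk p ⁻¹' S))
      = 2 * volume (Prod.mk p ⁻¹' S) := by
  filter_upwards [Measure.ae_ne volume 1, Measure.ae_ne volume (-1)] with p hp₁ hp₂
  rcases lt_or_ge (p ^ 2) 1 with hp | hp
  · have hsqrt : √(1 - p ^ 2) ≠ 0 := (Real.sqrt_pos.2 (sub_pos.2 hp)).ne'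
    rw [← mul_assoc, ← ENNReal.ofReal_mul (by positivity), mul_inv_cancel_right₀ hsqrt,
      ENNReal.ofReal_ofNat]
  · have hempty : Prod.mk p ⁻¹' S = ∅ := by
      refine eq_empty_of_forall_notMem fun x hx ↦ ?_
      have hx := hS hx
      have : p ^ 2 = 1 := le_antisymm (by nlinarith [hx.1, hx.2.1]) hp
      exact (sq_eq_one_iff.1 this).elim hp₁ hp₂
    simp [hempty]

lemma det_add_fin_two {R : Type*} [CommRing R] (A B : Matrix (Fin 2) (Fin 2) R) :
    (A + B).det = A.det + B.det + (adjugate A * B).trace := by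
  simp only [det_fin_two, adjugate_fin_two, trace_fin_two, mul_apply, Fin.sum_univ_two,
    Matrix.add_apply, of_apply, cons_val_zero, cons_val_one]
  ring

section Unitary

variable {n : Type*} [Fintype n] [DecidableEq n]

instance {α : Type*} [CommRing α] [StarRing α] [TopologicalSpace α] [ContinuousStar α] :
    ContinuousInv (specialUnitaryGroup n α) where
  continuous_inv := by
    refine Continuous.subtype_mk (f := fun A : specialUnitaryGroup n α ↦ star A.1) ?_ _
    exact continuous_subtype_val.star

lemma adjugate_eq_star {α : Type*} [CommRing α] [StarRing α] (A : specialUnitaryGroup n α) :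
    adjugate A.1 = star A.1 := by
  have hA := mem_specialUnitaryGroup_iff.1 A.2
  calc
    adjugate A.1 = adjugate A.1 * A.1 * star A.1 := by
      rw [mul_assoc, mem_unitaryGroup_iff.1 hA.1, mul_one]
    _ = star A.1 := by rw [adjugate_mul, hA.2, one_smul, one_mul]

lemma norm_toLp_mulVec {𝕜 : Type*} [RCLike 𝕜] {U : Matrix n n 𝕜} (hU : U ∈ unitaryGroup n 𝕜)
    (x : n → 𝕜) :
    ‖WithLp.toLp 2 (U *ᵥ x)‖ = ‖WithLp.toLp 2 x‖ := by
  rw [← sq_eq_sq₀ (norm_nonneg _) (norm_nonneg _), ← inner_self_eq_norm_sq (𝕜 := 𝕜),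
    ← inner_self_eq_norm_sq (𝕜 := 𝕜), EuclideanSpace.inner_toLp_toLp,
    EuclideanSpace.inner_toLp_toLp, star_mulVec, dotProduct_comm, ← dotProduct_mulVec,
    mulVec_mulVec, ← star_eq_conjTranspose, mem_unitaryGroup_iff'.1 hU, one_mulVec,
    dotProduct_comm]

lemma measurePreserving_mulVec {M : Matrix n n ℂ} (hM : ‖M.det‖ = 1) :
    MeasurePreserving (fun x : n → ℂ ↦ M *ᵥ x) := by
  refine ⟨by fun_prop, ?_⟩
  have hdet : |LinearMap.det ((toLin' M).restrictScalars ℝ)| = 1 := by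
    rw [LinearMap.det_restrictScalars, LinearMap.det_toLin', Algebra.norm_complex_apply,
      Complex.normSq_eq_norm_sq, hM, one_pow, abs_one]
  have hmap := Measure.map_linearMap_addHaar_eq_smul_addHaar (volume : Measure (n → ℂ))
    (f := (toLin' M).restrictScalars ℝ) (abs_pos.1 (hdet ▸ one_pos))
  rwa [abs_inv, hdet, inv_one, ENNReal.ofReal_one, one_smul] at hmap

end Unitary

section SpecialUnitaryTwo

local notation "SU2" => specialUnitaryGroup (Fin 2) ℂ

instance : SecondCountableTopology (Matrix (Fin 2) (Fin 2) ℂ) :=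
  inferInstanceAs (SecondCountableTopology (Fin 2 → Fin 2 → ℂ))

instance : SecondCountableTopology SU2 :=
  TopologicalSpace.Subtype.secondCountableTopology (SU2 : Set (Matrix (Fin 2) (Fin 2) ℂ))

instance : MeasurableMul₂ SU2 := ⟨continuous_mul.measurable⟩

instance : MeasurableInv SU2 := ⟨continuous_inv.measurable⟩

lemma specialUnitaryGroup_apply_one_one (A : SU2) : A.1 1 1 = conj (A.1 0 0) := by
  simpa [adjugate_fin_two] using congr_fun₂ (adjugate_eq_star A) 0 0

lemma specialUnitaryGroup_apply_zero_one (A : SU2) : A.1 0 1 = -conj (A.1 1 0) := by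
  simpa [adjugate_fin_two, neg_eq_iff_eq_neg] using congr_fun₂ (adjugate_eq_star A) 0 1

lemma normSq_add_normSq_of_specialUnitaryGroup (A : SU2) :
    Complex.normSq (A.1 0 0) + Complex.normSq (A.1 1 0) = 1 := by
  have hdet : A.1.det = 1 := (mem_specialUnitaryGroup_iff.1 A.2).2
  rw [det_fin_two, specialUnitaryGroup_apply_one_one, specialUnitaryGroup_apply_zero_one, neg_mul,
    sub_neg_eq_add, Complex.mul_conj, mul_comm, Complex.mul_conj] at hdet
  exact_mod_cast hdet

lemma mem_specialUnitaryGroup_of_normSq_add_normSq {z w : ℂ}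
    (h : Complex.normSq z + Complex.normSq w = 1) : !![z, -conj w; w, conj z] ∈ SU2 := by
  have h' : z * conj z + w * conj w = 1 := by
    rw [Complex.mul_conj, Complex.mul_conj]
    exact_mod_cast h
  refine mem_specialUnitaryGroup_iff.2 ⟨mem_unitaryGroup_iff.2 ?_, ?_⟩
  · ext i j
    fin_cases i <;> fin_cases j <;> simp [mul_apply, star_apply] <;> grind
  · rw [det_fin_two_of]
    linear_combination h'

lemma exists_col_eq_inv_norm_smul {x : Fin 2 → ℂ} (hx : x ≠ 0) :
    ∃ g : SU2, g.1.col 0 = (‖WithLp.toLp 2 x‖ : ℂ)⁻¹ • x := by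
  set u := (‖WithLp.toLp 2 x‖ : ℂ)⁻¹ • x with hu
  have hnorm : ‖WithLp.toLp 2 u‖ = 1 := by
    have : ‖WithLp.toLp 2 x‖ ≠ 0 := by simpa using hx
    simp [hu, norm_smul, this]
  have hsq : Complex.normSq (u 0) + Complex.normSq (u 1) = 1 := by
    simpa [EuclideanSpace.norm_eq, Complex.normSq_eq_norm_sq] using hnorm
  refine ⟨⟨_, mem_specialUnitaryGroup_of_normSq_add_normSq hsq⟩, ?_⟩
  ext i
  fin_cases i <;> rfl

lemma exists_conj_apply_one_zero_eq_zero (b : SU2) : ∃ g : SU2, (g⁻¹ * b * g).1 1 0 = 0 := by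
  obtain ⟨c, hc⟩ := Module.End.exists_eigenvalue (toLin' b.1)
  obtain ⟨v, hv⟩ := hc.exists_hasEigenvector
  obtain ⟨g, hg⟩ := exists_col_eq_inv_norm_smul hv.2
  have hbg : b.1 *ᵥ g.1.col 0 = c • g.1.col 0 := by
    rw [hg, mulVec_smul, ← toLin'_apply, hv.apply_eq_smul, smul_comm]
  refine ⟨g, ?_⟩
  calc
    (g⁻¹ * b * g).1 1 0 = ((g⁻¹).1 *ᵥ (b.1 *ᵥ g.1.col 0)) 1 := by
      rw [mulVec_mulVec]
      rfl
    _ = c • (g⁻¹ * g).1 1 0 := by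
      rw [hbg, mulVec_smul]
      rfl
    _ = 0 := by simp

/-- The number `cos θ` for a matrix with eigenvalues `exp (± i θ)`; the spectral invariants of a
triple are its values at the three quotients. -/
noncomputable def halfTrace (A : SU2) : ℝ := A.1.trace.re / 2

lemma halfTrace_eq_re (A : SU2) : halfTrace A = (A.1 0 0).re := by
  simp [halfTrace, trace_fin_two, specialUnitaryGroup_apply_one_one]

lemma measurable_apply_zero_zero : Measurable fun A : SU2 ↦ A.1 0 0 :=
  (continuous_subtype_val.matrix_elem 0 0).measurable

@[fun_prop]
lemma measurable_halfTrace : Measurable halfTrace := by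
  rw [funext halfTrace_eq_re]
  exact Complex.measurable_re.comp measurable_apply_zero_zero

lemma halfTrace_conj (g A : SU2) : halfTrace (g⁻¹ * A * g) = halfTrace A := by
  have : (g⁻¹ * A * g).1.trace = (g * (g⁻¹ * A)).1.trace := trace_mul_comm _ _
  rw [halfTrace, this, mul_inv_cancel_left, halfTrace]

lemma re_det_add_sub_two_div_two (A B : SU2) :
    ((A.1 + B.1).det.re - 2) / 2 = halfTrace (A⁻¹ * B) := by
  rw [det_add_fin_two, adjugate_eq_star, (mem_specialUnitaryGroup_iff.1 A.2).2,
    (mem_specialUnitaryGroup_iff.1 B.2).2, Complex.add_re, halfTrace]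
  have : ((1 : ℂ) + 1).re = 2 := by norm_num
  rw [this, add_sub_cancel_left]
  rfl

lemma spectralInvariants_eq (x : SU2 × SU2 × SU2) : spectralInvariants x =
    (halfTrace (x.1⁻¹ * x.2.1), halfTrace (x.1⁻¹ * x.2.2), halfTrace (x.2.1⁻¹ * x.2.2)) := by
  simp only [spectralInvariants, re_det_add_sub_two_div_two]

variable (η : Measure SU2) [IsProbabilityMeasure η] [η.IsMulLeftInvariant]

lemma measurePreserving_mulVec_euclideanBall (A : SU2) :
    MeasurePreserving (fun x ↦ A.1 *ᵥ x) (volume.restrict euclideanBall)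
      (volume.restrict euclideanBall) := by
  have hpre : (fun x ↦ A.1 *ᵥ x) ⁻¹' euclideanBall = euclideanBall := by
    ext x
    simp only [euclideanBall, mem_preimage, mem_ball_zero_iff,
      norm_toLp_mulVec (specialUnitaryGroup_le_unitaryGroup A.2)]
  have hdet : ‖A.1.det‖ = 1 := by rw [(mem_specialUnitaryGroup_iff.1 A.2).2, norm_one]
  simpa only [hpre] using
    (measurePreserving_mulVec hdet).restrict_preimage isOpen_euclideanBall.measurableSet

/-- `SU(2)` acts transitively on directions, so averaging over it replaces the normalized vector by
the first column of a Haar random matrix. -/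
lemma setLIntegral_euclideanBall_comp_div_norm_eq_lintegral {F : ℂ → ℝ≥0∞} (hF : Measurable F) :
    ∫⁻ x in euclideanBall, F (x 0 / ‖WithLp.toLp 2 x‖) =
      volume euclideanBall * ∫⁻ A, F (A.1 0 0) ∂η := by
  have := isMulRightInvariant_of_isMulLeftInvariant η
  have hmeas : Measurable (Function.uncurry fun (A : SU2) x ↦ A.1 *ᵥ x) :=
    ((continuous_subtype_val.comp continuous_fst).matrix_mulVec continuous_snd).measurable
  have havg {x : Fin 2 → ℂ} (hx : x ≠ 0) :
      ∫⁻ A : SU2, F ((A.1 *ᵥ x) 0 / ‖WithLp.toLp 2 (A.1 *ᵥ x)‖) ∂η = ∫⁻ A, F (A.1 0 0) ∂η := by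
    obtain ⟨g, hg⟩ := exists_col_eq_inv_norm_smul hx
    have hentry (A : SU2) :
        (A.1 *ᵥ x) 0 / ‖WithLp.toLp 2 (A.1 *ᵥ x)‖ = (A * g).1 0 0 := by
      rw [norm_toLp_mulVec (specialUnitaryGroup_le_unitaryGroup A.2), div_eq_inv_mul,
        ← smul_eq_mul, ← Pi.smul_apply, ← mulVec_smul, ← hg]
      rfl
    simp_rw [hentry]
    exact lintegral_mul_right_eq_self (fun A : SU2 ↦ F (A.1 0 0)) g
  calc
    _ = ∫⁻ x in euclideanBall,
          ∫⁻ A : SU2, F ((A.1 *ᵥ x) 0 / ‖WithLp.toLp 2 (A.1 *ᵥ x)‖) ∂η :=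
      lintegral_eq_lintegral_lintegral_of_measurePreserving η _ hmeas
        measurePreserving_mulVec_euclideanBall (by fun_prop)
    _ = ∫⁻ _ in euclideanBall, ∫⁻ A : SU2, F (A.1 0 0) ∂η := by
      refine lintegral_congr_ae ?_
      filter_upwards [ae_restrict_of_ae (Measure.ae_ne volume 0)] with x hx using havg hx
    _ = _ := by rw [setLIntegral_const, mul_comm]

lemma map_apply_zero_zero : η.map (fun A : SU2 ↦ A.1 0 0) = volume[|ball (0 : ℂ) 1] := by
  have := Measure.isProbabilityMeasure_map (μ := η) measurable_apply_zero_zero.aemeasurable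
  refine eq_cond_of_eq_smul_restrict (c := (volume euclideanBall)⁻¹ *
    (ENNReal.ofReal Real.pi * ∫⁻ s in Ioo (0 : ℝ) 1, ENNReal.ofReal s)) ?_
  refine Measure.ext_of_lintegral _ fun F hF ↦ ?_
  rw [lintegral_map hF measurable_apply_zero_zero, lintegral_smul_measure, smul_eq_mul, mul_assoc,
    ← setLIntegral_euclideanBall_comp_div_norm hF,
    setLIntegral_euclideanBall_comp_div_norm_eq_lintegral η hF, ← mul_assoc,
    ENNReal.inv_mul_cancel volume_euclideanBall_ne_zero volume_euclideanBall_ne_top, one_mul]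

lemma map_halfTrace : η.map halfTrace = (volume (ball (0 : ℂ) 1))⁻¹ •
    volume.withDensity fun p : ℝ ↦ ENNReal.ofReal (2 * √(1 - p ^ 2)) := by
  rw [funext halfTrace_eq_re, ← map_re_restrict_ball, ← Measure.map_smul]
  exact (map_apply_zero_zero η ▸
    Measure.map_map Complex.measurable_re measurable_apply_zero_zero).symm

lemma ae_halfTrace_sq_lt_one : ∀ᵐ A ∂η, halfTrace A ^ 2 < 1 := by
  have hball : ∀ᵐ z ∂η.map fun A : SU2 ↦ A.1 0 0, z ∈ ball (0 : ℂ) 1 := by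
    rw [map_apply_zero_zero]
    exact ae_cond_mem measurableSet_ball
  filter_upwards [ae_of_ae_map measurable_apply_zero_zero.aemeasurable hball] with A hA
  rw [halfTrace_eq_re, sq_lt_one_iff_abs_lt_one]
  exact (Complex.abs_re_le_norm _).trans_lt (mem_ball_zero_iff.1 hA)

lemma halfTrace_inv_mul_of_apply_one_zero_eq_zero {A : SU2} (hA : A.1 1 0 = 0) (B : SU2) :
    halfTrace (A⁻¹ * B) = halfTrace A * (B.1 0 0).re + (A.1 0 0).im * (B.1 0 0).im := by
  have hentry : (A⁻¹ * B).1 0 0 = conj (A.1 0 0) * B.1 0 0 := by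
    change (star A.1 * B.1) 0 0 = _
    simp [mul_apply, hA]
  simp [halfTrace_eq_re, hentry]

lemma map_halfTrace_prodMk_of_apply_one_zero_eq_zero {A : SU2} (hA : A.1 1 0 = 0)
    (hA' : halfTrace A ^ 2 < 1) :
    η.map (fun B ↦ (halfTrace B, halfTrace (A⁻¹ * B))) =
      ((volume (ball (0 : ℂ) 1))⁻¹ * ENNReal.ofReal (√(1 - halfTrace A ^ 2))⁻¹) •
        volume.restrict (Prod.mk (halfTrace A) ⁻¹' DeltaBody) := by
  have hs : halfTrace A ^ 2 + (A.1 0 0).im ^ 2 = 1 := by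
    simpa [hA, halfTrace_eq_re, Complex.normSq_apply, sq] using
      normSq_add_normSq_of_specialUnitaryGroup A
  have hs₀ : (A.1 0 0).im ≠ 0 := fun h ↦ hA'.ne (by simpa [h] using hs)
  have hjac : |(A.1 0 0).im⁻¹| = (√(1 - halfTrace A ^ 2))⁻¹ := by
    rw [← hs, add_sub_cancel_left, Real.sqrt_sq_eq_abs, abs_inv]
  have hfactor : (fun B ↦ (halfTrace B, halfTrace (A⁻¹ * B))) =
      (fun z : ℂ ↦ (z.re, halfTrace A * z.re + (A.1 0 0).im * z.im)) ∘
        fun B : SU2 ↦ B.1 0 0 := by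
    ext B : 1
    rw [halfTrace_inv_mul_of_apply_one_zero_eq_zero hA, halfTrace_eq_re B, Function.comp_apply]
  rw [hfactor, ← Measure.map_map (by fun_prop) measurable_apply_zero_zero, map_apply_zero_zero,
    ProbabilityTheory.cond, Measure.map_smul, map_shear_restrict_ball hs hs₀, smul_smul, hjac]

/-- Conjugating `A` to a diagonal matrix makes both half traces linear in the upper left entry
of `B`. -/
lemma map_halfTrace_prodMk {A : SU2} (hA : halfTrace A ^ 2 < 1) :
    η.map (fun B ↦ (halfTrace B, halfTrace (A⁻¹ * B))) =
      ((volume (ball (0 : ℂ) 1))⁻¹ * ENNReal.ofReal (√(1 - halfTrace A ^ 2))⁻¹) •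
        volume.restrict (Prod.mk (halfTrace A) ⁻¹' DeltaBody) := by
  obtain ⟨g, hg⟩ := exists_conj_apply_one_zero_eq_zero A
  set D := g⁻¹ * A * g with hD
  have hAD : halfTrace A = halfTrace D := (halfTrace_conj g A).symm
  have hfactor : (fun B ↦ (halfTrace B, halfTrace (A⁻¹ * B))) =
      (fun B ↦ (halfTrace B, halfTrace (D⁻¹ * B))) ∘ fun B ↦ g⁻¹ * B * g := by
    ext B : 1
    have hquot : D⁻¹ * (g⁻¹ * B * g) = g⁻¹ * (A⁻¹ * B) * g := by
      rw [hD]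
      group
    simp only [Function.comp_apply, hquot, halfTrace_conj]
  rw [hfactor, ← Measure.map_map (by fun_prop) (measurePreserving_conj η g).measurable,
    (measurePreserving_conj η g).map_eq, hAD]
  exact map_halfTrace_prodMk_of_apply_one_zero_eq_zero η hg (hAD ▸ hA)

lemma map_halfTrace_prod : (η.prod η).map
    (fun x ↦ (halfTrace x.1, halfTrace x.2, halfTrace (x.1⁻¹ * x.2))) =
      ((volume (ball (0 : ℂ) 1))⁻¹ * (volume (ball (0 : ℂ) 1))⁻¹ * 2) •
        volume.restrict DeltaBody := by
  ext S hS
  set V := volume (ball (0 : ℂ) 1)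
  have hV : V⁻¹ ≠ ⊤ := ENNReal.inv_ne_top.2 (measure_ball_pos _ _ one_pos).ne'
  have hSΔ : MeasurableSet (S ∩ DeltaBody) := hS.inter isClosed_deltaBody.measurableSet
  have hslice {A : SU2} (hA : halfTrace A ^ 2 < 1) :
      η {B | (halfTrace A, halfTrace B, halfTrace (A⁻¹ * B)) ∈ S} =
        V⁻¹ * (ENNReal.ofReal (√(1 - halfTrace A ^ 2))⁻¹ *
          volume (Prod.mk (halfTrace A) ⁻¹' (S ∩ DeltaBody))) := by
    have hSA : MeasurableSet (Prod.mk (halfTrace A) ⁻¹' S) := hS.preimage measurable_prodMk_left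
    have := DFunLike.congr_fun (map_halfTrace_prodMk η hA) (Prod.mk (halfTrace A) ⁻¹' S)
    rwa [Measure.map_apply (by fun_prop) hSA, Measure.smul_apply, Measure.restrict_apply hSA,
      ← preimage_inter, smul_eq_mul, mul_assoc] at this
  have hmeas : Measurable fun p : ℝ ↦ ENNReal.ofReal (√(1 - p ^ 2))⁻¹ *
      volume (Prod.mk p ⁻¹' (S ∩ DeltaBody)) :=
    (by fun_prop : Measurable fun p : ℝ ↦ ENNReal.ofReal (√(1 - p ^ 2))⁻¹).mul
      (measurable_measure_prodMk_left hSΔ)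
  calc
    _ = ∫⁻ A, η {B | (halfTrace A, halfTrace B, halfTrace (A⁻¹ * B)) ∈ S} ∂η := by
      rw [Measure.map_apply (by fun_prop) hS, Measure.prod_apply (hS.preimage (by fun_prop))]
      rfl
    _ = V⁻¹ * ∫⁻ A, ENNReal.ofReal (√(1 - halfTrace A ^ 2))⁻¹ *
          volume (Prod.mk (halfTrace A) ⁻¹' (S ∩ DeltaBody)) ∂η := by
      rw [← lintegral_const_mul' _ _ hV]
      refine lintegral_congr_ae ?_
      filter_upwards [ae_halfTrace_sq_lt_one η] with A hA using hslice hA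
    _ = V⁻¹ * (V⁻¹ * ∫⁻ p : ℝ, 2 * volume (Prod.mk p ⁻¹' (S ∩ DeltaBody))) := by
      rw [← lintegral_map hmeas measurable_halfTrace, map_halfTrace, lintegral_smul_measure,
        lintegral_withDensity_eq_lintegral_mul _ (by fun_prop) hmeas, smul_eq_mul]
      congr 2
      exact lintegral_congr_ae (ae_semicircle_mul_volume_slice inter_subset_right)
    _ = _ := by
      rw [lintegral_const_mul _ (measurable_measure_prodMk_left hSΔ), ← Measure.prod_apply hSΔ,
        ← Measure.volume_eq_prod, Measure.smul_apply, Measure.restrict_apply hS, smul_eq_mul,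
        mul_assoc, mul_assoc]

lemma measurable_spectralInvariants : Measurable spectralInvariants := by
  rw [funext spectralInvariants_eq]
  fun_prop

end SpecialUnitaryTwo

/-- the pushforward of the Haar probability measure on `G = SU(2)³` under the
spectral-invariants map is the normalized Lebesgue measure on the body `Δ`.
(The Haar probability measure is characterized as a translation-invariant probability
measure on the compact group `G`.) -/
theorem pushforward_Haar_is_normalized_Lebesgue_on_Delta
    (μ : Measure (Matrix.specialUnitaryGroup (Fin 2) ℂ × Matrix.specialUnitaryGroup (Fin 2) ℂ ×
      Matrix.specialUnitaryGroup (Fin 2) ℂ))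
    [IsProbabilityMeasure μ]
    (hinv : ∀ g : Matrix.specialUnitaryGroup (Fin 2) ℂ × Matrix.specialUnitaryGroup (Fin 2) ℂ ×
      Matrix.specialUnitaryGroup (Fin 2) ℂ, Measure.map (fun x => g * x) μ = μ) :
    Measure.map spectralInvariants μ = (volume DeltaBody)⁻¹ • volume.restrict DeltaBody := by
  have : μ.IsMulLeftInvariant := ⟨hinv⟩
  set η := μ.map Prod.fst
  have : IsProbabilityMeasure η := Measure.isProbabilityMeasure_map measurable_fst.aemeasurable
  have : η.IsMulLeftInvariant :=
    isMulLeftInvariant_map (MulHom.fst _ _) measurable_fst Prod.fst_surjective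
  have : (η.prod (η.prod η)).IsMulLeftInvariant := Measure.prod.instIsMulLeftInvariant
  have hμ : μ = η.prod (η.prod η) := eq_of_isMulLeftInvariant _ _
  have hdiff := measurePreserving_mul_snd η (η.prod η) (f := fun A ↦ (A⁻¹, A⁻¹)) (by fun_prop)
  have hfactor : spectralInvariants =
      (fun x ↦ (halfTrace x.1, halfTrace x.2, halfTrace (x.1⁻¹ * x.2))) ∘
        fun x ↦ (x.1⁻¹, x.1⁻¹) * x.2 := by
    ext x : 1
    simp [spectralInvariants_eq, mul_assoc]
  have hlaw := map_halfTrace_prod η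
  rw [← hdiff.map_eq, Measure.map_map (by fun_prop) hdiff.measurable, ← hfactor, ← hμ] at hlaw
  have := Measure.isProbabilityMeasure_map (μ := μ) measurable_spectralInvariants.aemeasurable
  exact eq_cond_of_eq_smul_restrict hlaw
end

section
/- Fix l ≥ 2 and matrices A₁, …, A_l ∈ SU(2). For symmetric l×l matrices α = (α_{ij}) and β = (β_{ij}) of natural numbers with zero diagonal, let Ξ[α] = ∏_{i<j} (u_i^{(1)}u_j^{(2)} − u_i^{(2)}u_j^{(1)})^{α_{ij}}, a polynomial in the 2l complex variables u_j^{(1)}, u_j^{(2)} (j = 1,…,l), and let Φ[α,β](A₁,…,A_l) = ⟨f, Ξ[β]⟩ where f(u₁,…,u_l) = Ξ[α](u₁A₁, …, u_lA_l), the inner product being the Fock inner product. Let 𝐓 = (t_{ij}) and 𝐓' = (t'_{ij}) be skew-symmetric real l×l matrices, let T and T' be the 2l×2l matrices with 2×2 blocks T_{ij} = t_{ij}·[[0,1],[−1,0]] and T'_{ij} = t'_{ij}·[[0,1],[−1,0]], and let U be the block-diagonal 2l×2l matrix with blocks A₁, …, A_l. Then there exists ε > 0 such that whenever all |t_{ij}|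 < ε and |t'_{ij}| < ε, the series S = Σ_{α} Σ_{β} (∏_{i<j} t_{ij}^{α_{ij}} t'_{ij}^{β_{ij}} / (α_{ij}!·β_{ij}!)) · Φ[α,β](A₁,…,A_l), summed over all pairs of symmetric natural-number matrices with zero diagonal, converges and satisfies S² · det(1 − U·T·Uᵗ·T') = 1, i.e. S = det(1 − U·T·Uᵗ·T')^{−1/2}. -/
set_option autoImplicit false

open MvPolynomial Matrix

/-- The Fock inner product on polynomials in the `2l` variables `u_j^{(1)}, u_j^{(2)}`:
monomials are pairwise orthogonal and `‖∏ variablesᵏ‖² = ∏ k!`. -/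
noncomputable def fockInnerL {l : ℕ} (f g : MvPolynomial (Fin l × Fin 2) ℂ) : ℂ :=
  ∑ d ∈ f.support, f.coeff d * star (g.coeff d) * ∏ i, ((d i).factorial : ℂ)

/-- `Ξ[α] = ∏_{i<j} (u_i^{(1)}u_j^{(2)} − u_i^{(2)}u_j^{(1)})^{α_{ij}}`. -/
noncomputable def XiL {l : ℕ} (α : Matrix (Fin l) (Fin l) ℕ) :
    MvPolynomial (Fin l × Fin 2) ℂ :=
  ∏ p ∈ Finset.univ.filter (fun p : Fin l × Fin l => p.1 < p.2),
    (X (p.1, 0) * X (p.2, 1) - X (p.1, 1) * X (p.2, 0)) ^ α p.1 p.2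

/-- The action `f(u₁,…,u_l) ↦ f(u₁A₁,…,u_lA_l)`. -/
noncomputable def actL {l : ℕ} (A : Fin l → Matrix (Fin 2) (Fin 2) ℂ)
    (f : MvPolynomial (Fin l × Fin 2) ℂ) : MvPolynomial (Fin l × Fin 2) ℂ :=
  MvPolynomial.aeval
    (fun v : Fin l × Fin 2 =>
      C (A v.1 0 v.2) * X (v.1, 0) + C (A v.1 1 v.2) * X (v.1, 1)) f

/-- The matrix coefficient `Φ[α,β](A₁,…,A_l) = ⟨(⊗T(A_j))Ξ[α], Ξ[β]⟩`. -/
noncomputable def PhiL {l : ℕ} (α β : Matrix (Fin l) (Fin l) ℕ)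
    (A : Fin l → Matrix (Fin 2) (Fin 2) ℂ) : ℂ :=
  fockInnerL (actL A (XiL α)) (XiL β)

/-- Symmetric `l×l` matrices of natural numbers with zero diagonal. -/
def SymZeroDiag (l : ℕ) : Type :=
  {M : Matrix (Fin l) (Fin l) ℕ // M.transpose = M ∧ ∀ i, M i i = 0}

/-- The `2l×2l` matrix with `2×2` blocks `t_{ij}·[[0,1],[−1,0]]`. -/
noncomputable def blockT {l : ℕ} (t : Matrix (Fin l) (Fin l) ℝ) :
    Matrix (Fin l × Fin 2) (Fin l × Fin 2) ℂ :=
  Matrix.of fun p q => (t p.1 q.1 : ℂ) * !![0, 1; -1, 0] p.2 q.2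

/-- The block-diagonal `2l×2l` matrix with diagonal blocks `A₁,…,A_l`. -/
noncomputable def blockDiagU {l : ℕ} (A : Fin l → Matrix (Fin 2) (Fin 2) ℂ) :
    Matrix (Fin l × Fin 2) (Fin l × Fin 2) ℂ :=
  Matrix.of fun p q => if p.1 = q.1 then A p.1 p.2 q.2 else 0

/-!
Each bracket `u_i⁽¹⁾ u_j⁽²⁾ - u_i⁽²⁾ u_j⁽¹⁾` is a quadratic form and `Ξ[α]` is a monomial in the
brackets, so by the multinomial theorem `S` is the Fock pairing `⟨exp q_M, exp q_N⟩` of two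
quadratic forms with symmetric matrices `M = U T Uᵗ` and `N = T'`.

Let `P = ∑ n, ⟨q_M ^ n / n!, q_N ^ n / n!⟩ X ^ n`, and let `K` be the matrix of the corresponding
series with `exp q_N` multiplied by two variables. Multiplication by a variable and the
corresponding partial derivative are adjoint for the Fock pairing, which gives
`K = P • M + X • M N K` and `2 P' = tr (N K)`. With Jacobi's formula for the derivative of a
determinant these yield `(P ^ 2 * det (1 - X • M N))' = 0`, that is `P ^ 2 * det (1 - X • M N) = 1`.

For convergence at `X = 1`, a pairing of forms of degree `2 n` is at most `(2 n)! ≤ 4 ^ n n! ^ 2`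
times the product of their `ℓ¹` coefficient norms, and `∑ n! ∏ r_i ^ a_i / a_i!` over the
multi-indices `a` of degree `n` is `(∑ r_i) ^ n`, a geometric series.
-/

section DividedPower

variable {R A ι : Type*} [CommRing A] [Algebra ℚ A]

/-- The divided power `a ^ n / n!` in a commutative `ℚ`-algebra: the degree-`n` term of `exp a`. -/
noncomputable def dividedPower (n : ℕ) (a : A) : A :=
  (n.factorial : ℚ)⁻¹ • a ^ n

@[simp]
theorem dividedPower_zero (a : A) : dividedPower 0 a = 1 := by
  simp [dividedPower]

theorem add_one_smul_dividedPower_succ (n : ℕ) (a : A) :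
    ((n : ℚ) + 1) • dividedPower (n + 1) a = a * dividedPower n a := by
  have hn : ((n : ℚ) + 1) ≠ 0 := by positivity
  rw [dividedPower, dividedPower, smul_smul, Nat.factorial_succ, Nat.cast_mul, Nat.cast_succ,
    mul_inv, mul_inv_cancel_left₀ hn, pow_succ', mul_smul_comm]

theorem derivation_dividedPower_succ [CommRing R] [Algebra R A] (D : Derivation R A A) (n : ℕ)
    (a : A) : D (dividedPower (n + 1) a) = dividedPower n a * D a := by
  have hn : ((n : ℚ) + 1) ≠ 0 := by positivity
  rw [dividedPower, dividedPower, map_rat_smul, Derivation.leibniz_pow,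
    Nat.add_sub_cancel, ← Nat.cast_smul_eq_nsmul ℚ, smul_smul, Nat.factorial_succ, Nat.cast_mul,
    Nat.cast_succ, mul_inv, mul_right_comm, inv_mul_cancel₀ hn, one_mul, smul_eq_mul,
    smul_mul_assoc]

theorem dividedPower_smul [CommRing R] [Algebra ℚ R] [Algebra R A] (n : ℕ) (c : R) (a : A) :
    dividedPower n (c • a) = dividedPower n c • a ^ n := by
  rw [dividedPower, dividedPower, smul_pow, smul_assoc]

theorem dividedPower_sum [DecidableEq ι] (s : Finset ι) (x : ι → A) (n : ℕ) :
    dividedPower n (∑ i ∈ s, x i) = ∑ a ∈ s.piAntidiag n, ∏ i ∈ s, dividedPower (a i) (x i) := by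
  rw [dividedPower, Finset.sum_pow_eq_sum_piAntidiag, Finset.smul_sum]
  refine Finset.sum_congr rfl fun a ha => ?_
  have hn : (n.factorial : ℚ) ≠ 0 := by positivity
  have hmul : (∏ i ∈ s, ((a i).factorial : ℚ)) * Nat.multinomial s a = n.factorial := by
    rw [← (Finset.mem_piAntidiag.1 ha).1]
    exact_mod_cast Nat.multinomial_spec s a
  have hprod : (∏ i ∈ s, ((a i).factorial : ℚ)) ≠ 0 := by positivity
  simp only [dividedPower]
  rw [Finset.prod_smul, Finset.prod_inv_distrib, ← nsmul_eq_mul, ← Nat.cast_smul_eq_nsmul ℚ,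
    smul_smul]
  congr 1
  field_simp
  rw [mul_comm, hmul]

end DividedPower

section FockPairing

variable {σ R : Type*} [Fintype σ] [CommSemiring R]

/-- The bilinear Fock pairing: monomials are pairwise orthogonal and `X ^ d` pairs with itself to
`∏ i, (d i)!`. It is the Fock inner product without the complex conjugation. -/
noncomputable def fockPairing : MvPolynomial σ R →ₗ[R] MvPolynomial σ R →ₗ[R] R :=
  (basisMonomials σ R).constr R fun d => (∏ i, ((d i).factorial : R)) • lcoeff R d

theorem fockPairing_monomial_left (d : σ →₀ ℕ) (a : R) (g : MvPolynomial σ R) :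
    fockPairing (monomial d a) g = a * (∏ i, ((d i).factorial : R)) * coeff d g := by
  have hbasis : monomial d a = a • basisMonomials σ R d := by simp [smul_monomial]
  rw [hbasis, map_smul, fockPairing, Module.Basis.constr_basis]
  simp [mul_assoc]

theorem fockPairing_eq_sum (f g : MvPolynomial σ R) :
    fockPairing f g = ∑ d ∈ f.support, coeff d f * coeff d g * ∏ i, ((d i).factorial : R) := by
  conv_lhs => rw [f.as_sum]
  rw [map_sum, LinearMap.sum_apply]
  exact Finset.sum_congr rfl fun d _ => by rw [fockPairing_monomial_left, mul_right_comm]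

theorem fockPairing_comm (f g : MvPolynomial σ R) : fockPairing f g = fockPairing g f := by
  classical
  suffices h : (fockPairing : MvPolynomial σ R →ₗ[R] _) = fockPairing.flip from
    LinearMap.congr_fun₂ h f g
  refine (basisMonomials σ R).ext fun d => (basisMonomials σ R).ext fun e => ?_
  simp only [coe_basisMonomials, LinearMap.flip_apply, fockPairing_monomial_left, coeff_monomial]
  obtain rfl | h := eq_or_ne d e
  · rfl
  · simp [h, h.symm]

theorem fockPairing_X_mul (i : σ) (f g : MvPolynomial σ R) :
    fockPairing (X i * f) g = fockPairing f (pderiv i g) := by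
  classical
  induction f using MvPolynomial.induction_on' with
  | add p q hp hq => simp only [mul_add, map_add, LinearMap.add_apply, hp, hq]
  | monomial d a =>
    have hfactorial (j : σ) : (((d + Finsupp.single i 1 : σ →₀ ℕ) j).factorial : R)
        = (d j).factorial * if j = i then (d j : R) + 1 else 1 := by
      obtain rfl | h := eq_or_ne j i
      · simp [Nat.factorial_succ, mul_comm]
      · simp [h]
    have hprod : ∏ j, (((d + Finsupp.single i 1 : σ →₀ ℕ) j).factorial : R)
        = (∏ j, ((d j).factorial : R)) * (d i + 1) := by
      simp only [hfactorial, Finset.prod_mul_distrib, Finset.prod_ite_eq', Finset.mem_univ, if_true]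
    rw [X, monomial_mul, one_mul, add_comm, fockPairing_monomial_left, fockPairing_monomial_left,
      coeff_pderiv, hprod]
    ring

theorem fockPairing_eq_zero_of_isHomogeneous {f g : MvPolynomial σ R} {m n : ℕ}
    (hf : f.IsHomogeneous m) (hg : g.IsHomogeneous n) (hmn : m ≠ n) : fockPairing f g = 0 := by
  rw [fockPairing_eq_sum]
  refine Finset.sum_eq_zero fun d hd => ?_
  rw [hg.coeff_eq_zero fun hdeg => hmn ((hf (mem_support_iff.1 hd)).symm.trans ?_)]
  · simp
  · rw [← hdeg, Finsupp.degree_eq_weight_one]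
    rfl

end FockPairing

section QuadForm

variable {m σ R ι : Type*} [Fintype σ]

theorem toMvPolynomial_eq_sum_smul_X [CommSemiring R] (M : Matrix m σ R) (i : m) :
    M.toMvPolynomial i = ∑ j, M i j • X j := by
  simp only [Matrix.toMvPolynomial, smul_eq_C_mul, C_mul_X_eq_monomial]

theorem isHomogeneous_smul {S : Type*} [CommSemiring R] [Monoid S] [DistribMulAction S R]
    [IsScalarTower S R R] {p : MvPolynomial m R} {n : ℕ} (hp : p.IsHomogeneous n) (c : S) :
    (c • p).IsHomogeneous n :=
  Submodule.smul_of_tower_mem (homogeneousSubmodule m R n) c hp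

variable [CommRing R] [Algebra ℚ R]

theorem isHomogeneous_dividedPower {p : MvPolynomial m R} {d : ℕ} (hp : p.IsHomogeneous d)
    (n : ℕ) : (dividedPower n p).IsHomogeneous (d * n) :=
  isHomogeneous_smul (hp.pow n) _

theorem isHomogeneous_prod_dividedPower (s : Finset ι) {x : ι → MvPolynomial m R} {d : ℕ}
    (hx : ∀ i, (x i).IsHomogeneous d) (a : ι → ℕ) :
    (∏ i ∈ s, dividedPower (a i) (x i)).IsHomogeneous (d * ∑ i ∈ s, a i) := by
  rw [Finset.mul_sum]
  exact IsHomogeneous.prod _ _ _ fun i _ => isHomogeneous_dividedPower (hx i) (a i)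

/-- The quadratic form `½ ∑ i j, M i j * X i * X j` as a polynomial. -/
noncomputable def quadForm (M : Matrix σ σ R) : MvPolynomial σ R :=
  (2 : ℚ)⁻¹ • ∑ i, X i * M.toMvPolynomial i

theorem two_smul_quadForm (M : Matrix σ σ R) :
    (2 : ℚ) • quadForm M = ∑ i, ∑ j, M i j • (X i * X j) := by
  simp only [quadForm, smul_inv_smul₀ (two_ne_zero' ℚ), toMvPolynomial_eq_sum_smul_X,
    Finset.mul_sum, mul_smul_comm]

theorem pderiv_quadForm {M : Matrix σ σ R} (hM : M.IsSymm) (k : σ) :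
    pderiv k (quadForm M) = M.toMvPolynomial k := by
  classical
  have hleibniz (i j : σ) : pderiv k (M i j • (X i * X j : MvPolynomial σ R))
      = (if j = k then M i j • X i else 0) + if i = k then M i j • X j else 0 := by
    simp only [Derivation.map_smul, Derivation.leibniz, pderiv_X, Pi.single_apply, smul_eq_mul]
    split_ifs <;> simp
  refine smul_right_injective _ (two_ne_zero' ℚ) ?_
  calc (2 : ℚ) • pderiv k (quadForm M)
      = pderiv k (∑ i, ∑ j, M i j • (X i * X j)) := by rw [← two_smul_quadForm, map_rat_smul]
    _ = ∑ i, ∑ j, ((if j = k then M i j • X i else 0) + if i = k then M i j • X j else 0) := by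
      simp only [map_sum, hleibniz]
    _ = M.toMvPolynomial k + M.toMvPolynomial k := by
      simp [toMvPolynomial_eq_sum_smul_X, Finset.sum_add_distrib, Finset.sum_ite_irrel, hM.apply k]
    _ = (2 : ℚ) • M.toMvPolynomial k := (two_smul ℚ _).symm

theorem bind₁_toMvPolynomial_quadForm [Fintype m] (U : Matrix m σ R) (M : Matrix m m R) :
    bind₁ U.toMvPolynomial (quadForm M) = quadForm (Uᵀ * M * U) := by
  have hmul (a : σ) : (Uᵀ * (M * U)).toMvPolynomial a
      = ∑ i, U i a • (M * U).toMvPolynomial i := by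
    rw [toMvPolynomial_mul, toMvPolynomial_eq_sum_smul_X]
    simp
  simp only [quadForm, map_rat_smul, map_sum, map_mul, bind₁_X_right, ← toMvPolynomial_mul,
    Matrix.mul_assoc Uᵀ M U, hmul, Finset.mul_sum]
  rw [Finset.sum_comm]
  simp only [toMvPolynomial_eq_sum_smul_X U, Finset.sum_mul, smul_mul_assoc, mul_smul_comm]

end QuadForm

section FockMoment

variable {σ R : Type*} [Fintype σ] [CommRing R] [Algebra ℚ R]

theorem fockPairing_X_mul_dividedPower_quadForm_succ {M : Matrix σ σ R} (hM : M.IsSymm) (i : σ)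
    (f : MvPolynomial σ R) (n : ℕ) :
    fockPairing (X i * f) (dividedPower (n + 1) (quadForm M))
      = ∑ k, M i k * fockPairing (pderiv k f) (dividedPower n (quadForm M)) := by
  simp only [fockPairing_X_mul, derivation_dividedPower_succ, pderiv_quadForm hM,
    toMvPolynomial_eq_sum_smul_X, Finset.mul_sum, map_sum, mul_smul_comm, map_smul, smul_eq_mul]
  refine Finset.sum_congr rfl fun k _ => ?_
  rw [fockPairing_comm, mul_comm (dividedPower n _), fockPairing_X_mul, fockPairing_comm]

/-- The pairing `⟨q_M ^ n / n!, q_N ^ n / n!⟩` of the divided powers of two quadratic forms, the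
degree-`n` part of `⟨exp q_M, exp q_N⟩`. -/
noncomputable def fockCoeff (M N : Matrix σ σ R) (n : ℕ) : R :=
  fockPairing (dividedPower n (quadForm M)) (dividedPower n (quadForm N))

/-- The second moments `⟨q_M ^ (n + 1) / (n + 1)!, X i * X j * q_N ^ n / n!⟩`, the degree-`n` part
of `⟨exp q_M, X i * X j * exp q_N⟩`. -/
noncomputable def fockMoment (M N : Matrix σ σ R) (n : ℕ) : Matrix σ σ R :=
  Matrix.of fun i j => fockPairing (X i * (X j * dividedPower n (quadForm N)))
    (dividedPower (n + 1) (quadForm M))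

variable (M N : Matrix σ σ R)

theorem fockCoeff_zero : fockCoeff M N 0 = 1 := by
  have hone : (1 : MvPolynomial σ R) = monomial 0 1 := rfl
  rw [fockCoeff, dividedPower_zero, dividedPower_zero, hone, fockPairing_monomial_left]
  simp

variable {M} in
theorem fockMoment_apply (hM : M.IsSymm) (n : ℕ) (i j : σ) :
    fockMoment M N n i j = M i j * fockCoeff M N n + ∑ k, M i k *
      fockPairing (X j * pderiv k (dividedPower n (quadForm N)))
        (dividedPower n (quadForm M)) := by
  classical
  have hleibniz (k : σ) : fockPairing (pderiv k (X j * dividedPower n (quadForm N)))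
      (dividedPower n (quadForm M)) = (if j = k then fockCoeff M N n else 0)
        + fockPairing (X j * pderiv k (dividedPower n (quadForm N)))
            (dividedPower n (quadForm M)) := by
    rw [Derivation.leibniz, pderiv_X, map_add, LinearMap.add_apply, add_comm, fockCoeff,
      fockPairing_comm (dividedPower n (quadForm M))]
    obtain rfl | h := eq_or_ne j k <;> simp [*]
  simp only [fockMoment, Matrix.of_apply, fockPairing_X_mul_dividedPower_quadForm_succ hM, hleibniz,
    mul_add, Finset.sum_add_distrib, mul_ite, mul_zero, Finset.sum_ite_eq, Finset.mem_univ,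
    if_true]

variable {M} in
theorem fockMoment_zero (hM : M.IsSymm) : fockMoment M N 0 = fockCoeff M N 0 • M := by
  ext i j
  simp [fockMoment_apply N hM, mul_comm]

variable {M N} in
theorem fockMoment_succ (hM : M.IsSymm) (hN : N.IsSymm) (n : ℕ) :
    fockMoment M N (n + 1) = fockCoeff M N (n + 1) • M + M * N * fockMoment M N n := by
  ext i j
  rw [fockMoment_apply N hM, Matrix.mul_assoc, Matrix.add_apply, Matrix.smul_apply, smul_eq_mul,
    Matrix.mul_apply, mul_comm]
  congr 1
  refine Finset.sum_congr rfl fun k _ => ?_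
  congr 1
  simp only [derivation_dividedPower_succ, pderiv_quadForm hN, toMvPolynomial_eq_sum_smul_X,
    Matrix.mul_apply, fockMoment, Matrix.of_apply, Finset.mul_sum, mul_smul_comm, map_sum,
    map_smul, LinearMap.sum_apply, LinearMap.smul_apply, smul_eq_mul]
  refine Finset.sum_congr rfl fun m _ => ?_
  ring_nf

theorem two_mul_fockCoeff_succ (n : ℕ) :
    2 * (fockCoeff M N (n + 1) * (n + 1)) = Matrix.trace (N * fockMoment M N n) := by
  have hdouble : (2 : ℚ) • ((n : ℚ) + 1) • dividedPower (n + 1) (quadForm N)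
      = ∑ i, ∑ j, N i j • (X j * (X i * dividedPower n (quadForm N))) := by
    rw [add_one_smul_dividedPower_succ, ← smul_mul_assoc, two_smul_quadForm]
    simp only [Finset.sum_mul, smul_mul_assoc, mul_assoc, mul_left_comm (X _) (X _)]
  calc 2 * (fockCoeff M N (n + 1) * (n + 1))
      = (2 : ℚ) • ((n : ℚ) + 1) • fockCoeff M N (n + 1) := by
        simp [Algebra.smul_def, map_ofNat, mul_comm (fockCoeff M N (n + 1))]
    _ = fockPairing ((2 : ℚ) • ((n : ℚ) + 1) • dividedPower (n + 1) (quadForm N))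
          (dividedPower (n + 1) (quadForm M)) := by
        rw [fockCoeff, fockPairing_comm]
        simp only [map_rat_smul, LinearMap.smul_apply]
    _ = Matrix.trace (N * fockMoment M N n) := by
        simp [hdouble, Matrix.trace, Matrix.mul_apply, fockMoment]

end FockMoment

section Jacobi

variable {k R ι n : Type*} [CommRing k] [CommRing R] [Algebra k R] (D : Derivation k R R)

theorem derivation_prod [DecidableEq ι] (s : Finset ι) (f : ι → R) :
    D (∏ i ∈ s, f i) = ∑ i ∈ s, D (f i) * ∏ j ∈ s.erase i, f j := by
  induction s using Finset.induction_on with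
  | empty => simp
  | insert a s ha ih =>
    rw [Finset.prod_insert ha, D.leibniz, ih, Finset.sum_insert ha, Finset.erase_insert ha,
      smul_eq_mul, smul_eq_mul, add_comm, mul_comm, Finset.mul_sum]
    congr 1
    refine Finset.sum_congr rfl fun i hi => ?_
    have hai : a ≠ i := fun h => ha (h ▸ hi)
    rw [Finset.erase_insert_of_ne hai, Finset.prod_insert (by simp [ha]), mul_left_comm]

variable [Fintype n] [DecidableEq n]

theorem derivation_det_eq_sum_det_updateCol (A : Matrix n n R) :
    D A.det = ∑ i, (A.updateCol i fun j => D (A j i)).det := by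
  have hcol (i : n) (τ : Equiv.Perm n) :
      ∏ j, A.updateCol i (fun j => D (A j i)) (τ j) j
        = D (A (τ i) i) * ∏ j ∈ Finset.univ.erase i, A (τ j) j := by
    rw [← Finset.mul_prod_erase _ _ (Finset.mem_univ i), Matrix.updateCol_self]
    congr 1
    exact Finset.prod_congr rfl fun j hj => Matrix.updateCol_ne (Finset.ne_of_mem_erase hj)
  simp only [Matrix.det_apply, hcol, map_sum, Units.smul_def, map_zsmul, derivation_prod,
    Finset.smul_sum]
  exact Finset.sum_comm

theorem derivation_det (A : Matrix n n R) :
    D A.det = Matrix.trace (A.adjugate * A.map D) := by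
  simp only [derivation_det_eq_sum_det_updateCol, ← Matrix.cramer_apply,
    Matrix.cramer_eq_adjugate_mulVec, Matrix.trace, Matrix.diag, Matrix.mul_apply, Matrix.mulVec,
    dotProduct, Matrix.map_apply]

end Jacobi

section FockSeries

variable {σ R : Type*} [Fintype σ] [DecidableEq σ] [CommRing R]

theorem coe_charpolyRev (W : Matrix σ σ R) :
    (W.charpolyRev : PowerSeries R)
      = (1 - (PowerSeries.X : PowerSeries R) • W.map PowerSeries.C).det := by
  rw [Matrix.charpolyRev, ← Polynomial.coeToPowerSeries.ringHom_apply, RingHom.map_det]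
  congr 1
  ext1 i j
  simp [Matrix.one_apply, apply_ite, mul_comm PowerSeries.X]

theorem constantCoeff_charpolyRev (W : Matrix σ σ R) :
    PowerSeries.constantCoeff (W.charpolyRev : PowerSeries R) = 1 := by
  rw [Polynomial.constantCoeff_coe, Polynomial.coeff_zero_eq_eval_zero, W.eval_charpolyRev]

open scoped PowerSeries in
theorem derivative_coe_charpolyRev (W : Matrix σ σ R) :
    PowerSeries.derivative R (W.charpolyRev : R⟦X⟧) = -Matrix.trace
      ((1 - (PowerSeries.X : R⟦X⟧) • W.map PowerSeries.C).adjugate * W.map PowerSeries.C) := by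
  rw [coe_charpolyRev, derivation_det, ← Matrix.trace_neg, ← Matrix.mul_neg]
  congr 2
  ext1 i j
  simp [Matrix.one_apply, apply_ite]

variable [Algebra ℚ R]

open scoped PowerSeries in
theorem sq_mul_charpolyRev_eq_one {M N : Matrix σ σ R} {P : R⟦X⟧} {K : Matrix σ σ R⟦X⟧}
    (hP : PowerSeries.constantCoeff P = 1)
    (hK : K = P • M.map PowerSeries.C
      + (PowerSeries.X : R⟦X⟧) • ((M * N).map PowerSeries.C * K))
    (hderiv : 2 * PowerSeries.derivative R P = Matrix.trace (N.map PowerSeries.C * K)) :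
    P ^ 2 * ((M * N).charpolyRev : R⟦X⟧) = 1 := by
  set W : Matrix σ σ R⟦X⟧ := (M * N).map PowerSeries.C with hW
  set Q : Matrix σ σ R⟦X⟧ := 1 - (PowerSeries.X : R⟦X⟧) • W with hQ
  have hQK : Q * K = P • M.map PowerSeries.C := by
    rw [hQ, sub_mul, one_mul, Matrix.smul_mul, sub_eq_iff_eq_add]
    exact hK
  have hcramer : Q.det • K = P • (Q.adjugate * M.map PowerSeries.C) := by
    rw [← Matrix.mul_smul, ← hQK, ← mul_assoc, Matrix.adjugate_mul, Matrix.smul_mul, one_mul]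
  have hode : 2 * PowerSeries.derivative R P * ((M * N).charpolyRev : R⟦X⟧)
      = -P * PowerSeries.derivative R ((M * N).charpolyRev : R⟦X⟧) := by
    calc 2 * PowerSeries.derivative R P * ((M * N).charpolyRev : R⟦X⟧)
        = Matrix.trace (N.map PowerSeries.C * Q.det • K) := by
          rw [hderiv, coe_charpolyRev, Matrix.mul_smul, Matrix.trace_smul, smul_eq_mul, mul_comm]
      _ = P * Matrix.trace (Q.adjugate * W) := by
          rw [hcramer, Matrix.mul_smul, Matrix.trace_smul, smul_eq_mul, Matrix.trace_mul_comm,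
            mul_assoc, hW, Matrix.map_mul]
      _ = -P * PowerSeries.derivative R ((M * N).charpolyRev : R⟦X⟧) := by
          rw [derivative_coe_charpolyRev, neg_mul_neg]
  have : IsAddTorsionFree R := IsAddTorsionFree.of_module_rat R
  refine PowerSeries.derivative.ext ?_ ?_
  · rw [Derivation.leibniz, Derivation.leibniz_pow, Derivation.map_one_eq_zero]
    simp only [smul_eq_mul, nsmul_eq_mul]
    linear_combination P * hode
  · rw [map_mul, map_pow, hP, constantCoeff_charpolyRev, map_one, one_pow, one_mul]

theorem mk_fockCoeff_sq_mul_charpolyRev {M N : Matrix σ σ R} (hM : M.IsSymm) (hN : N.IsSymm) :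
    PowerSeries.mk (fockCoeff M N) ^ 2 * ((M * N).charpolyRev : PowerSeries R) = 1 := by
  refine sq_mul_charpolyRev_eq_one
    (K := Matrix.of fun i j => PowerSeries.mk fun n => fockMoment M N n i j) ?_ ?_ ?_
  · simp [fockCoeff_zero]
  · ext i j n
    rw [Matrix.add_apply, Matrix.smul_apply, Matrix.smul_apply, smul_eq_mul, smul_eq_mul,
      Matrix.of_apply, Matrix.map_apply, map_add, PowerSeries.coeff_mul_C, PowerSeries.coeff_mk,
      PowerSeries.coeff_mk]
    cases n with
    | zero => simp [fockMoment_zero N hM]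
    | succ n =>
      rw [fockMoment_succ hM hN, PowerSeries.coeff_succ_X_mul, Matrix.add_apply, Matrix.mul_apply,
        Matrix.mul_apply]
      simp
  · ext n
    rw [two_mul, map_add, PowerSeries.coeff_derivative, PowerSeries.coeff_mk, ← two_mul,
      two_mul_fockCoeff_succ]
    simp [Matrix.trace, Matrix.mul_apply]

end FockSeries

section EvalOne

open scoped PowerSeries

variable {σ R : Type*} [Fintype σ] [DecidableEq σ]

theorem eval_one_charpolyRev [CommRing R] (W : Matrix σ σ R) :
    W.charpolyRev.eval 1 = (1 - W).det := by
  rw [Matrix.charpolyRev, ← Polynomial.coe_evalRingHom, RingHom.map_det]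
  congr 1
  ext1 i j
  simp [Matrix.one_apply, apply_ite]

theorem summable_norm_coeff_coe [NormedCommRing R] (p : Polynomial R) :
    Summable fun n => ‖PowerSeries.coeff n (p : R⟦X⟧)‖ :=
  summable_of_ne_finset_zero (s := p.support) fun n hn => by
    simp [Polynomial.notMem_support_iff.1 hn]

theorem tsum_coeff_coe [NormedCommRing R] (p : Polynomial R) :
    ∑' n, PowerSeries.coeff n (p : R⟦X⟧) = p.eval 1 := by
  rw [tsum_eq_sum (s := p.support) fun n hn => by simp [Polynomial.notMem_support_iff.1 hn],
    Polynomial.eval_eq_sum, Polynomial.sum]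
  simp

theorem summable_norm_coeff_mul [NormedCommRing R] {p q : R⟦X⟧}
    (hp : Summable fun n => ‖PowerSeries.coeff n p‖)
    (hq : Summable fun n => ‖PowerSeries.coeff n q‖) :
    Summable fun n => ‖PowerSeries.coeff n (p * q)‖ := by
  simpa only [PowerSeries.coeff_mul] using summable_norm_sum_mul_antidiagonal_of_summable_norm hp hq

variable [NormedCommRing R] [CompleteSpace R]

theorem tsum_coeff_mul {p q : R⟦X⟧} (hp : Summable fun n => ‖PowerSeries.coeff n p‖)
    (hq : Summable fun n => ‖PowerSeries.coeff n q‖) :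
    ∑' n, PowerSeries.coeff n (p * q)
      = (∑' n, PowerSeries.coeff n p) * ∑' n, PowerSeries.coeff n q := by
  simpa only [PowerSeries.coeff_mul] using
    (tsum_mul_tsum_eq_tsum_sum_antidiagonal_of_summable_norm hp hq).symm

theorem tsum_fockCoeff_sq_mul_det [Algebra ℚ R] {M N : Matrix σ σ R} (hM : M.IsSymm)
    (hN : N.IsSymm) (hsum : Summable fun n => ‖fockCoeff M N n‖) :
    (∑' n, fockCoeff M N n) ^ 2 * (1 - M * N).det = 1 := by
  set P := PowerSeries.mk (fockCoeff M N) with hP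
  have hP_sum : Summable fun n => ‖PowerSeries.coeff n P‖ := by
    simpa only [hP, PowerSeries.coeff_mk] using hsum
  calc (∑' n, fockCoeff M N n) ^ 2 * (1 - M * N).det
      = (∑' n, PowerSeries.coeff n P) ^ 2
          * ∑' n, PowerSeries.coeff n ((M * N).charpolyRev : R⟦X⟧) := by
        simp only [tsum_coeff_coe, eval_one_charpolyRev, hP, PowerSeries.coeff_mk]
    _ = ∑' n, PowerSeries.coeff n (P ^ 2 * ((M * N).charpolyRev : R⟦X⟧)) := by
        rw [sq, sq, tsum_coeff_mul (summable_norm_coeff_mul hP_sum hP_sum)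
          (summable_norm_coeff_coe _), tsum_coeff_mul hP_sum hP_sum]
    _ = ∑' n, PowerSeries.coeff n ((1 : Polynomial R) : R⟦X⟧) := by
        rw [mk_fockCoeff_sq_mul_charpolyRev hM hN, Polynomial.coe_one]
    _ = 1 := by rw [tsum_coeff_coe, Polynomial.eval_one]

end EvalOne

section CoeffNorm

variable {σ R ι : Type*} [NormedCommRing R]

/-- The `ℓ¹` norm of the coefficients of a polynomial. -/
noncomputable def coeffNorm (f : MvPolynomial σ R) : ℝ :=
  ∑ d ∈ f.support, ‖coeff d f‖

theorem coeffNorm_eq_sum {f : MvPolynomial σ R} {s : Finset (σ →₀ ℕ)} (h : f.support ⊆ s) :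
    coeffNorm f = ∑ d ∈ s, ‖coeff d f‖ :=
  Finset.sum_subset h fun d _ hd => by rw [notMem_support_iff.1 hd, norm_zero]

theorem coeffNorm_monomial (d : σ →₀ ℕ) (a : R) : coeffNorm (monomial d a) = ‖a‖ := by
  classical
  rw [coeffNorm_eq_sum support_monomial_subset, Finset.sum_singleton, coeff_monomial, if_pos rfl]

theorem coeffNorm_add_le (f g : MvPolynomial σ R) :
    coeffNorm (f + g) ≤ coeffNorm f + coeffNorm g := by
  classical
  rw [coeffNorm_eq_sum support_add, coeffNorm_eq_sum Finset.subset_union_left,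
    coeffNorm_eq_sum Finset.subset_union_right, ← Finset.sum_add_distrib]
  exact Finset.sum_le_sum fun d _ => norm_add_le _ _

theorem coeffNorm_sum_le (s : Finset ι) (f : ι → MvPolynomial σ R) :
    coeffNorm (∑ i ∈ s, f i) ≤ ∑ i ∈ s, coeffNorm (f i) :=
  Finset.le_sum_of_subadditive coeffNorm (by simp [coeffNorm]) coeffNorm_add_le s f

theorem coeffNorm_mul_le (f g : MvPolynomial σ R) :
    coeffNorm (f * g) ≤ coeffNorm f * coeffNorm g := by
  conv_lhs => rw [f.as_sum, g.as_sum, Finset.sum_mul_sum]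
  rw [coeffNorm.eq_1 f, coeffNorm.eq_1 g, Finset.sum_mul_sum]
  refine (coeffNorm_sum_le _ _).trans (Finset.sum_le_sum fun d _ =>
    (coeffNorm_sum_le _ _).trans (Finset.sum_le_sum fun e _ => ?_))
  rw [monomial_mul, coeffNorm_monomial]
  exact norm_mul_le _ _

theorem coeffNorm_nonneg (f : MvPolynomial σ R) : 0 ≤ coeffNorm f :=
  Finset.sum_nonneg fun _ _ => norm_nonneg _

theorem norm_coeff_le_coeffNorm (d : σ →₀ ℕ) (f : MvPolynomial σ R) :
    ‖coeff d f‖ ≤ coeffNorm f := by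
  classical
  rw [coeffNorm_eq_sum (Finset.subset_insert d f.support)]
  exact Finset.single_le_sum (f := fun e => ‖coeff e f‖) (fun _ _ => norm_nonneg _)
    (Finset.mem_insert_self _ _)

theorem coeffNorm_prod_le [NormOneClass R] (s : Finset ι) (f : ι → MvPolynomial σ R) :
    coeffNorm (∏ i ∈ s, f i) ≤ ∏ i ∈ s, coeffNorm (f i) := by
  classical
  induction s using Finset.induction_on with
  | empty =>
    rw [Finset.prod_empty, Finset.prod_empty, ← C_1, ← monomial_zero', coeffNorm_monomial, norm_one]
  | insert i s hi ih =>
    rw [Finset.prod_insert hi, Finset.prod_insert hi]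
    exact (coeffNorm_mul_le _ _).trans (mul_le_mul_of_nonneg_left ih (coeffNorm_nonneg _))

theorem coeffNorm_smul_le {S : Type*} [SeminormedRing S] [Module S R] [IsBoundedSMul S R] (c : S)
    (f : MvPolynomial σ R) : coeffNorm (c • f) ≤ ‖c‖ * coeffNorm f := by
  rw [coeffNorm_eq_sum (support_smul (a := c)), coeffNorm, Finset.mul_sum]
  exact Finset.sum_le_sum fun d _ => norm_smul_le c (coeff d f)

theorem exists_pos_sum_two_mul_coeffNorm_smul_lt_one [Fintype ι] (x : ι → MvPolynomial σ R) :
    ∃ ε > 0, ∀ c : ι → R, (∀ i, ‖c i‖ ≤ ε) → ∑ i, 2 * coeffNorm (c i • x i) < 1 := by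
  obtain ⟨ε, hε, hlt⟩ := exists_pos_mul_lt one_pos (2 * ∑ i, coeffNorm (x i))
  refine ⟨ε, hε, fun c hc => lt_of_le_of_lt ?_ hlt⟩
  rw [mul_assoc, Finset.sum_mul, ← Finset.mul_sum]
  gcongr with i
  refine (coeffNorm_smul_le _ _).trans ?_
  have := coeffNorm_nonneg (x i)
  rw [mul_comm]
  gcongr
  exact hc i

variable [NormedAlgebra ℚ R] [NormOneClass R]

theorem coeffNorm_dividedPower_le (n : ℕ) (f : MvPolynomial σ R) :
    coeffNorm (dividedPower n f) ≤ dividedPower n (coeffNorm f) := by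
  have hpow : coeffNorm (f ^ n) ≤ coeffNorm f ^ n := by
    simpa using coeffNorm_prod_le (Finset.range n) fun _ => f
  have hnorm : ‖(n.factorial : ℚ)⁻¹‖ = (n.factorial : ℝ)⁻¹ := by
    simp [← Rat.norm_cast_real]
  rw [dividedPower, dividedPower, Rat.smul_def, Rat.cast_inv, Rat.cast_natCast, ← hnorm]
  exact (coeffNorm_smul_le _ _).trans (by gcongr)

theorem coeffNorm_prod_dividedPower_le (s : Finset ι) (x : ι → MvPolynomial σ R) (a : ι → ℕ) :
    coeffNorm (∏ i ∈ s, dividedPower (a i) (x i))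
      ≤ ∏ i ∈ s, dividedPower (a i) (coeffNorm (x i)) :=
  (coeffNorm_prod_le _ _).trans <| Finset.prod_le_prod (fun _ _ => coeffNorm_nonneg _)
    fun _ _ => coeffNorm_dividedPower_le _ _

end CoeffNorm

section FockBound

variable {σ R : Type*} [Fintype σ] [NormedCommRing R] [NormOneClass R]

theorem norm_fockPairing_le {f : MvPolynomial σ R} {n : ℕ} (hf : f.IsHomogeneous n)
    (g : MvPolynomial σ R) :
    ‖fockPairing f g‖ ≤ n.factorial * (coeffNorm f * coeffNorm g) := by
  have hweight {d : σ →₀ ℕ} (hd : d ∈ f.support) :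
      ‖∏ i, ((d i).factorial : R)‖ ≤ n.factorial := by
    have hdeg : ∑ i, d i = n := by
      simpa [Finsupp.weight_apply, Finsupp.sum_fintype] using hf (mem_support_iff.1 hd)
    rw [← Nat.cast_prod]
    refine (Nat.norm_cast_le _).trans ?_
    rw [norm_one, mul_one, ← hdeg]
    exact_mod_cast Nat.le_of_dvd (Nat.factorial_pos _) (Nat.prod_factorial_dvd_factorial_sum _ _)
  rw [fockPairing_eq_sum, mul_comm, coeffNorm.eq_1 f, Finset.sum_mul, Finset.sum_mul]
  refine norm_sum_le_of_le _ fun d hd => (norm_mul_le _ _).trans ?_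
  have := coeffNorm_nonneg g
  gcongr
  · exact (norm_mul_le _ _).trans (by gcongr; exact norm_coeff_le_coeffNorm d g)
  · exact hweight hd

theorem norm_fockPairing_le_two_pow_mul_factorial {f g : MvPolynomial σ R} {m n : ℕ}
    (hf : f.IsHomogeneous (2 * m)) (hg : g.IsHomogeneous (2 * n)) :
    ‖fockPairing f g‖
      ≤ (m.factorial * (2 ^ m * coeffNorm f)) * (n.factorial * (2 ^ n * coeffNorm g)) := by
  have hf₀ := coeffNorm_nonneg f
  have hg₀ := coeffNorm_nonneg g
  obtain rfl | hmn := eq_or_ne m n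
  · have hfactorial : ((2 * m).factorial : ℝ) ≤ 2 ^ m * 2 ^ m * m.factorial * m.factorial := by
      rw [← pow_add, two_mul]
      exact_mod_cast (Nat.add_choose_mul_factorial_mul_factorial m m).symm.trans_le <|
        Nat.mul_le_mul_right _ <| Nat.mul_le_mul_right _ <| Nat.choose_le_two_pow _ _
    calc ‖fockPairing f g‖ ≤ (2 * m).factorial * (coeffNorm f * coeffNorm g) :=
          norm_fockPairing_le hf g
      _ ≤ 2 ^ m * 2 ^ m * m.factorial * m.factorial * (coeffNorm f * coeffNorm g) := by gcongr
      _ = _ := by ring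
  · rw [fockPairing_eq_zero_of_isHomogeneous hf hg (by lia), norm_zero]
    positivity

end FockBound

section MultiIndex

variable {ι κ E : Type*} [Fintype ι]

theorem prod_dividedPower_nonneg {r : ι → ℝ} (hr : ∀ i, 0 ≤ r i) (a : ι → ℕ) :
    0 ≤ ∏ i, dividedPower (a i) (r i) := by
  refine Finset.prod_nonneg fun i _ => ?_
  have := hr i
  rw [dividedPower, Rat.smul_def]
  positivity

theorem summable_factorial_mul_prod_dividedPower {r : ι → ℝ} (hr : ∀ i, 0 ≤ r i)
    (hr₁ : ∑ i, r i < 1) :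
    Summable fun a : ι → ℕ => ((∑ i, a i).factorial : ℝ) * ∏ i, dividedPower (a i) (r i) := by
  classical
  have hdegree (n : ℕ) : ∑ a ∈ Finset.univ.piAntidiag n,
      ((∑ i, a i).factorial : ℝ) * ∏ i, dividedPower (a i) (r i) = (∑ i, r i) ^ n := by
    have hn : (n.factorial : ℝ) ≠ 0 := by positivity
    calc _ = ∑ a ∈ Finset.univ.piAntidiag n, (n.factorial : ℝ) * ∏ i, dividedPower (a i) (r i) :=
          Finset.sum_congr rfl fun a ha => by rw [(Finset.mem_piAntidiag.1 ha).1]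
      _ = n.factorial * dividedPower n (∑ i, r i) := by rw [← Finset.mul_sum, dividedPower_sum]
      _ = (∑ i, r i) ^ n := by simp [dividedPower, Rat.smul_def, hn]
  refine (summable_partition (s := fun n => (Finset.univ.piAntidiag n : Finset (ι → ℕ)))
    (fun a => ?_) fun a => ⟨∑ i, a i, by simp, by simp⟩).2 ⟨fun n => ?_, ?_⟩
  · exact mul_nonneg (Nat.cast_nonneg _) (prod_dividedPower_nonneg hr a)
  · exact Summable.of_finite
  · refine (summable_geometric_of_lt_one (Finset.sum_nonneg fun i _ => hr i) hr₁).congr fun n => ?_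
    rw [← hdegree]
    exact (Finset.tsum_subtype' _ fun a : ι → ℕ => _).symm

theorem hasSum_sum_piAntidiag_product [Fintype κ] [DecidableEq ι] [DecidableEq κ] [AddCommGroup E]
    [UniformSpace E] [IsUniformAddGroup E] [CompleteSpace E] [T2Space E]
    {F : (ι → ℕ) × (κ → ℕ) → E} {S : E} (hF : HasSum F S)
    (hF₀ : ∀ a b, ∑ i, a i ≠ ∑ k, b k → F (a, b) = 0) :
    HasSum (fun n => ∑ a ∈ Finset.univ.piAntidiag n, ∑ b ∈ Finset.univ.piAntidiag n, F (a, b))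
      S := by
  convert hF.tsum_fiberwise (fun ab => ∑ i, ab.1 i) using 2 with n
  rw [tsum_subtype, tsum_eq_sum (s := Finset.univ.piAntidiag n ×ˢ Finset.univ.piAntidiag n),
    Finset.sum_product]
  · refine Finset.sum_congr rfl fun a ha => Finset.sum_congr rfl fun b _ => ?_
    simp [(Finset.mem_piAntidiag.1 ha).1]
  · rintro ab hab
    refine Set.indicator_apply_eq_zero.2 fun h => hF₀ _ _ fun h' => hab ?_
    simpa [← h'] using h

end MultiIndex

section QuadraticExponential

variable {σ R ι κ : Type*} [Fintype ι] [Fintype κ] [NormedCommRing R]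
  [NormedAlgebra ℚ R] [NormOneClass R]

theorem two_pow_mul_coeffNorm_prod_dividedPower_le (x : ι → MvPolynomial σ R) (a : ι → ℕ) :
    2 ^ (∑ i, a i) * coeffNorm (∏ i, dividedPower (a i) (x i))
      ≤ ∏ i, dividedPower (a i) (2 * coeffNorm (x i)) := by
  have hscale (i : ι) : dividedPower (a i) (2 * coeffNorm (x i))
      = 2 ^ a i * dividedPower (a i) (coeffNorm (x i)) := by
    rw [mul_comm, ← smul_eq_mul, dividedPower_smul, smul_eq_mul, mul_comm]
  simp only [hscale, Finset.prod_mul_distrib, Finset.prod_pow_eq_pow_sum]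
  gcongr
  exact coeffNorm_prod_dividedPower_le _ _ _

variable [Fintype σ]

theorem summable_norm_fockPairing_prod_dividedPower {x : ι → MvPolynomial σ R}
    {y : κ → MvPolynomial σ R} (hx : ∀ i, (x i).IsHomogeneous 2)
    (hy : ∀ k, (y k).IsHomogeneous 2) (hx₁ : ∑ i, 2 * coeffNorm (x i) < 1)
    (hy₁ : ∑ k, 2 * coeffNorm (y k) < 1) :
    Summable fun ab : (ι → ℕ) × (κ → ℕ) => ‖fockPairing (∏ i, dividedPower (ab.1 i) (x i))
      (∏ k, dividedPower (ab.2 k) (y k))‖ := by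
  have hnonneg (f : MvPolynomial σ R) : 0 ≤ 2 * coeffNorm f :=
    mul_nonneg zero_le_two (coeffNorm_nonneg f)
  refine .of_nonneg_of_le (fun _ => norm_nonneg _) (fun ab => ?_)
    ((summable_factorial_mul_prod_dividedPower (fun i => hnonneg (x i)) hx₁).mul_of_nonneg
      (summable_factorial_mul_prod_dividedPower (fun k => hnonneg (y k)) hy₁) ?_ ?_)
  · refine (norm_fockPairing_le_two_pow_mul_factorial (isHomogeneous_prod_dividedPower _ hx ab.1)
      (isHomogeneous_prod_dividedPower _ hy ab.2)).trans ?_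
    have := coeffNorm_nonneg (∏ k, dividedPower (ab.2 k) (y k))
    have := prod_dividedPower_nonneg (fun i => hnonneg (x i)) ab.1
    gcongr <;> exact two_pow_mul_coeffNorm_prod_dividedPower_le _ _
  · exact fun a => mul_nonneg (Nat.cast_nonneg _)
      (prod_dividedPower_nonneg (fun i => hnonneg (x i)) a)
  · exact fun b => mul_nonneg (Nat.cast_nonneg _)
      (prod_dividedPower_nonneg (fun k => hnonneg (y k)) b)

theorem exists_hasSum_fockPairing_prod_dividedPower [CompleteSpace R] {M N : Matrix σ σ R}
    (hM : M.IsSymm) (hN : N.IsSymm) {x : ι → MvPolynomial σ R} {y : κ → MvPolynomial σ R}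
    (hx : ∀ i, (x i).IsHomogeneous 2) (hy : ∀ k, (y k).IsHomogeneous 2)
    (hxM : ∑ i, x i = quadForm M) (hyN : ∑ k, y k = quadForm N)
    (hx₁ : ∑ i, 2 * coeffNorm (x i) < 1) (hy₁ : ∑ k, 2 * coeffNorm (y k) < 1) [DecidableEq σ] :
    ∃ S : R, HasSum (fun ab : (ι → ℕ) × (κ → ℕ) =>
        fockPairing (∏ i, dividedPower (ab.1 i) (x i)) (∏ k, dividedPower (ab.2 k) (y k))) S ∧
      S ^ 2 * (1 - M * N).det = 1 := by
  classical
  have hsum := summable_norm_fockPairing_prod_dividedPower hx hy hx₁ hy₁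
  have hzero (a : ι → ℕ) (b : κ → ℕ) (hab : ∑ i, a i ≠ ∑ k, b k) :
      fockPairing (∏ i, dividedPower (a i) (x i)) (∏ k, dividedPower (b k) (y k)) = 0 :=
    fockPairing_eq_zero_of_isHomogeneous (isHomogeneous_prod_dividedPower _ hx a)
      (isHomogeneous_prod_dividedPower _ hy b) (by lia)
  have hcoeff (n : ℕ) : fockCoeff M N n = ∑ a ∈ Finset.univ.piAntidiag n,
      ∑ b ∈ Finset.univ.piAntidiag n,
        fockPairing (∏ i, dividedPower (a i) (x i)) (∏ k, dividedPower (b k) (y k)) := by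
    simp only [fockCoeff, ← hxM, ← hyN, dividedPower_sum, map_sum, LinearMap.sum_apply]
    exact Finset.sum_comm
  have hfiber := hasSum_sum_piAntidiag_product hsum.of_norm.hasSum hzero
  have hfiber_norm := hasSum_sum_piAntidiag_product hsum.hasSum fun a b hab => by
    rw [hzero a b hab, norm_zero]
  refine ⟨_, hsum.of_norm.hasSum, ?_⟩
  rw [← hfiber.tsum_eq, ← funext hcoeff]
  refine tsum_fockCoeff_sq_mul_det hM hN (.of_nonneg_of_le (fun _ => norm_nonneg _) (fun n => ?_)
    hfiber_norm.summable)
  rw [hcoeff]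
  exact norm_sum_le_of_le _ fun a _ => norm_sum_le _ _

end QuadraticExponential

section Bracket

open scoped Kronecker

variable {n R : Type*} [CommRing R]

/-- The pairs `i < j`, which index the entries of a skew-symmetric matrix. -/
abbrev StrictPair (n : Type*) [LT n] : Type _ :=
  {p : n × n // p.1 < p.2}

/-- The bracket `u_i⁽¹⁾ u_j⁽²⁾ - u_i⁽²⁾ u_j⁽¹⁾`, the elementary `SL₂`-invariant. -/
noncomputable def bracket (i j : n) : MvPolynomial (n × Fin 2) R :=
  X (i, 0) * X (j, 1) - X (i, 1) * X (j, 0)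

/-- The block matrix with `2 × 2` blocks `t i j • !![0, 1; -1, 0]`. -/
def symplecticBlock (t : Matrix n n R) : Matrix (n × Fin 2) (n × Fin 2) R :=
  t ⊗ₖ !![0, 1; -1, 0]

theorem isHomogeneous_bracket (i j : n) : (bracket i j : MvPolynomial _ R).IsHomogeneous 2 :=
  ((isHomogeneous_X R _).mul (isHomogeneous_X R _)).sub
    ((isHomogeneous_X R _).mul (isHomogeneous_X R _))

theorem map_bracket {S : Type*} [CommRing S] (φ : R →+* S) (i j : n) :
    map φ (bracket i j) = bracket i j := by
  simp [bracket]

theorem bracket_swap (i j : n) : (bracket j i : MvPolynomial _ R) = -bracket i j := by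
  simp only [bracket]
  ring

theorem bracket_self (i : n) : (bracket i i : MvPolynomial _ R) = 0 := by
  rw [bracket, mul_comm, sub_self]

theorem isSymm_symplecticBlock {t : Matrix n n R} (ht : tᵀ = -t) : (symplecticBlock t).IsSymm := by
  ext ⟨i, a⟩ ⟨j, b⟩
  have hij : t j i = -t i j := congr_fun₂ ht i j
  fin_cases a <;> fin_cases b <;> simp [symplecticBlock, hij]

variable [Fintype n] [LinearOrder n]

theorem sum_sum_eq_two_nsmul_sum_lt {M : Type*} [AddCommMonoid M] {F : n → n → M}
    (hF : ∀ i j, F i j = F j i) (hF₀ : ∀ i, F i i = 0) :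
    ∑ i, ∑ j, F i j = 2 • ∑ p : StrictPair n, F p.1.1 p.1.2 := by
  have hsplit (i j : n) : F i j = (if i < j then F i j else 0) + if j < i then F j i else 0 := by
    obtain h | rfl | h := lt_trichotomy i j
    · simp [h, h.not_gt]
    · simp [hF₀]
    · simp [h, h.not_gt, hF i j]
  have hpairs : ∑ i, ∑ j, (if i < j then F i j else 0)
      = ∑ p : StrictPair n, F p.1.1 p.1.2 := by
    rw [← Fintype.sum_prod_type', ← Finset.sum_filter]
    exact Finset.sum_subtype _ (by simp) _
  calc ∑ i, ∑ j, F i j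
      = ∑ i, ∑ j, ((if i < j then F i j else 0) + if j < i then F j i else 0) :=
        Finset.sum_congr rfl fun i _ => Finset.sum_congr rfl fun j _ => hsplit i j
    _ = _ := by
        simp only [Finset.sum_add_distrib]
        rw [Finset.sum_comm (f := fun i j => if j < i then F j i else 0), hpairs, two_nsmul]

theorem quadForm_symplecticBlock [Algebra ℚ R] {t : Matrix n n R} (ht : tᵀ = -t) :
    quadForm (symplecticBlock t)
      = ∑ p : StrictPair n, t p.1.1 p.1.2 • bracket p.1.1 p.1.2 := by
  have hskew (i j : n) : t j i = -t i j := congr_fun₂ ht i j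
  refine smul_right_injective _ (two_ne_zero' ℚ) ?_
  calc (2 : ℚ) • quadForm (symplecticBlock t) = ∑ i, ∑ j, t i j • bracket i j := by
        simp only [two_smul_quadForm, Fintype.sum_prod_type, Fin.sum_univ_two, symplecticBlock,
          kroneckerMap_apply, bracket]
        refine Finset.sum_congr rfl fun i _ => ?_
        rw [← Finset.sum_add_distrib]
        exact Finset.sum_congr rfl fun j _ => by simp [sub_eq_add_neg]
    _ = 2 • ∑ p : StrictPair n, t p.1.1 p.1.2 • bracket p.1.1 p.1.2 :=
        sum_sum_eq_two_nsmul_sum_lt (fun i j => by rw [bracket_swap, hskew, neg_smul_neg])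
          fun i => by rw [bracket_self, smul_zero]
    _ = _ := (ofNat_smul_eq_nsmul ℚ 2 _).symm

end Bracket

section MatrixCoefficients

variable {l : ℕ}

/-- A symmetric matrix with zero diagonal is determined by its entries above the diagonal. -/
def symZeroDiagEquiv (l : ℕ) : SymZeroDiag l ≃ (StrictPair (Fin l) → ℕ) where
  toFun M p := M.1 p.1.1 p.1.2
  invFun a := ⟨Matrix.of fun i j =>
      if h : i < j then a ⟨(i, j), h⟩ else if h : j < i then a ⟨(j, i), h⟩ else 0, by
    refine ⟨?_, fun i => by simp⟩
    ext i j
    obtain h | rfl | h := lt_trichotomy i j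
    · simp [h, h.not_gt]
    · simp
    · simp [h, h.not_gt]⟩
  left_inv := by
    rintro ⟨M, hsymm, hdiag⟩
    refine Subtype.ext (Matrix.ext fun i j => ?_)
    obtain h | rfl | h := lt_trichotomy i j
    · simp [h]
    · simp [hdiag]
    · simpa [h, h.not_gt] using congr_fun₂ hsymm i j
  right_inv a := by
    ext p
    simp [p.2]

theorem XiL_eq_prod_bracket (α : Matrix (Fin l) (Fin l) ℕ) :
    XiL α = ∏ p : StrictPair (Fin l), bracket p.1.1 p.1.2 ^ α p.1.1 p.1.2 :=
  Finset.prod_subtype _ (by simp) fun p : Fin l × Fin l => bracket p.1 p.2 ^ α p.1 p.2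

theorem star_coeff_XiL (α : Matrix (Fin l) (Fin l) ℕ) (d : Fin l × Fin 2 →₀ ℕ) :
    star (coeff d (XiL α)) = coeff d (XiL α) := by
  have hreal : map (starRingEnd ℂ) (XiL α) = XiL α := by
    simp only [XiL_eq_prod_bracket, map_prod, map_pow, map_bracket]
  conv_rhs => rw [← hreal, coeff_map]
  rfl

theorem actL_eq_bind₁ (A : Fin l → Matrix (Fin 2) (Fin 2) ℂ) (f : MvPolynomial (Fin l × Fin 2) ℂ) :
    actL A f = bind₁ (blockDiagU A)ᵀ.toMvPolynomial f := by
  refine congr_arg (aeval · f) (funext fun v => ?_)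
  simp [toMvPolynomial_eq_sum_smul_X, blockDiagU, Fintype.sum_prod_type, Fin.sum_univ_two,
    smul_eq_C_mul]

variable (A : Fin l → Matrix (Fin 2) (Fin 2) ℂ)

theorem isHomogeneous_actL_bracket (i j : Fin l) : (actL A (bracket i j)).IsHomogeneous 2 := by
  rw [actL_eq_bind₁]
  exact (isHomogeneous_bracket i j).aeval _ (toMvPolynomial_isHomogeneous _)

theorem PhiL_eq_fockPairing (α β : Matrix (Fin l) (Fin l) ℕ) :
    PhiL α β A = fockPairing
      (∏ p : StrictPair (Fin l), actL A (bracket p.1.1 p.1.2) ^ α p.1.1 p.1.2)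
      (∏ p : StrictPair (Fin l), bracket p.1.1 p.1.2 ^ β p.1.1 p.1.2) := by
  have hact : actL A (XiL α)
      = ∏ p : StrictPair (Fin l), actL A (bracket p.1.1 p.1.2) ^ α p.1.1 p.1.2 := by
    simp only [XiL_eq_prod_bracket, actL_eq_bind₁, map_prod, map_pow]
  simp only [PhiL, fockInnerL, star_coeff_XiL]
  rw [← fockPairing_eq_sum, hact, XiL_eq_prod_bracket]

theorem sum_smul_actL_bracket {t : Matrix (Fin l) (Fin l) ℂ} (ht : tᵀ = -t) :
    ∑ p : StrictPair (Fin l), t p.1.1 p.1.2 • actL A (bracket p.1.1 p.1.2)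
      = quadForm (blockDiagU A * symplecticBlock t * (blockDiagU A)ᵀ) := by
  simpa only [quadForm_symplecticBlock ht, transpose_transpose, map_sum, map_smul,
    ← actL_eq_bind₁] using bind₁_toMvPolynomial_quadForm (blockDiagU A)ᵀ (symplecticBlock t)

theorem fockPairing_prod_dividedPower_smul_bracket (t t' : Matrix (Fin l) (Fin l) ℂ)
    (α β : Matrix (Fin l) (Fin l) ℕ) :
    fockPairing
        (∏ p : StrictPair (Fin l),
          dividedPower (α p.1.1 p.1.2) (t p.1.1 p.1.2 • actL A (bracket p.1.1 p.1.2)))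
        (∏ p : StrictPair (Fin l),
          dividedPower (β p.1.1 p.1.2) (t' p.1.1 p.1.2 • bracket p.1.1 p.1.2))
      = (∏ p ∈ Finset.univ.filter (fun p : Fin l × Fin l => p.1 < p.2),
          t p.1 p.2 ^ α p.1 p.2 * t' p.1 p.2 ^ β p.1 p.2 /
            ((α p.1 p.2).factorial * (β p.1 p.2).factorial : ℕ)) * PhiL α β A := by
  simp only [dividedPower_smul, Finset.prod_smul, map_smul, LinearMap.smul_apply, smul_eq_mul,
    ← PhiL_eq_fockPairing, ← mul_assoc, ← Finset.prod_mul_distrib]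
  congr 1
  refine .trans (Finset.prod_congr rfl fun p _ => ?_)
    (Finset.prod_subtype _ (by simp) fun p : Fin l × Fin l =>
      t p.1 p.2 ^ α p.1 p.2 * t' p.1 p.2 ^ β p.1 p.2 /
        ((α p.1 p.2).factorial * (β p.1 p.2).factorial : ℕ)).symm
  simp only [dividedPower, Rat.smul_def, Rat.cast_inv, Rat.cast_natCast, Nat.cast_mul]
  ring

theorem blockT_eq_symplecticBlock (t : Matrix (Fin l) (Fin l) ℝ) :
    blockT t = symplecticBlock (t.map Complex.ofReal) :=
  rfl

end MatrixCoefficients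

theorem generating_function_multi_general (l : ℕ) (A : Fin l → Matrix (Fin 2) (Fin 2) ℂ) :
    ∃ ε > (0 : ℝ), ∀ t t' : Matrix (Fin l) (Fin l) ℂ,
      tᵀ = -t → t'ᵀ = -t' → (∀ i j, ‖t i j‖ < ε) → (∀ i j, ‖t' i j‖ < ε) →
      ∃ S : ℂ,
        HasSum
          (fun ab : SymZeroDiag l × SymZeroDiag l =>
            (∏ p ∈ Finset.univ.filter (fun p : Fin l × Fin l => p.1 < p.2),
              t p.1 p.2 ^ ab.1.val p.1 p.2 * t' p.1 p.2 ^ ab.2.val p.1 p.2 /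
                ((ab.1.val p.1 p.2).factorial * (ab.2.val p.1 p.2).factorial : ℕ))
              * PhiL ab.1.val ab.2.val A) S ∧
        S ^ 2 * (1 - blockDiagU A * symplecticBlock t * (blockDiagU A)ᵀ * symplecticBlock t').det
          = 1 := by
  obtain ⟨ε, hε, hx⟩ := exists_pos_sum_two_mul_coeffNorm_smul_lt_one
    fun p : StrictPair (Fin l) => actL A (bracket p.1.1 p.1.2)
  obtain ⟨ε', hε', hy⟩ := exists_pos_sum_two_mul_coeffNorm_smul_lt_one (R := ℂ)
    fun p : StrictPair (Fin l) => bracket p.1.1 p.1.2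
  refine ⟨min ε ε', lt_min hε hε', fun t t' ht ht' hbound hbound' => ?_⟩
  have hsymm : (blockDiagU A * symplecticBlock t * (blockDiagU A)ᵀ).IsSymm := by
    simp only [Matrix.IsSymm, transpose_mul, transpose_transpose, (isSymm_symplecticBlock ht).eq,
      Matrix.mul_assoc]
  have hx_hom (p : StrictPair (Fin l)) :
      (t p.1.1 p.1.2 • actL A (bracket p.1.1 p.1.2)).IsHomogeneous 2 :=
    isHomogeneous_smul (isHomogeneous_actL_bracket A _ _) _
  have hy_hom (p : StrictPair (Fin l)) :
      (t' p.1.1 p.1.2 • (bracket p.1.1 p.1.2 : MvPolynomial (Fin l × Fin 2) ℂ)).IsHomogeneous 2 :=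
    isHomogeneous_smul (isHomogeneous_bracket _ _) _
  obtain ⟨S, hS, hdet⟩ := exists_hasSum_fockPairing_prod_dividedPower hsymm
    (isSymm_symplecticBlock ht') hx_hom hy_hom (sum_smul_actL_bracket A ht)
    (quadForm_symplecticBlock ht').symm
    (hx _ fun p => ((hbound p.1.1 p.1.2).trans_le (min_le_left _ _)).le)
    (hy _ fun p => ((hbound' p.1.1 p.1.2).trans_le (min_le_right _ _)).le)
  refine ⟨S, ?_, hdet⟩
  have hreindex := ((symZeroDiagEquiv l).prodCongr (symZeroDiagEquiv l)).hasSum_iff.2 hS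
  exact hreindex.congr_fun fun ab =>
    (fockPairing_prod_dividedPower_smul_bracket A t t' ab.1.1 ab.2.1).symm

/-- generating function for the matrix coefficients `Φ[α,β]` on
`SU(2)×⋯×SU(2)` (`l` factors): for skew-symmetric real matrices `𝐓, 𝐓'` with sufficiently
small entries, the series
`S = Σ_{α,β} (∏_{i<j} t_{ij}^{α_{ij}} t'_{ij}^{β_{ij}}/(α_{ij}!·β_{ij}!)) Φ[α,β]`
converges and `S = det(1 − U·T·Uᵗ·T')^{−1/2}`. -/
theorem generating_function_multi (l : ℕ) (hl : 2 ≤ l)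
    (A : Fin l → Matrix.specialUnitaryGroup (Fin 2) ℂ) :
    ∃ ε > (0 : ℝ), ∀ t t' : Matrix (Fin l) (Fin l) ℝ,
      t.transpose = -t → t'.transpose = -t' →
      (∀ i j, |t i j| < ε) → (∀ i j, |t' i j| < ε) →
      ∃ S : ℂ,
        HasSum
          (fun ab : SymZeroDiag l × SymZeroDiag l =>
            ((∏ p ∈ Finset.univ.filter (fun p : Fin l × Fin l => p.1 < p.2),
              t p.1 p.2 ^ ab.1.val p.1 p.2 * t' p.1 p.2 ^ ab.2.val p.1 p.2 /
                ((ab.1.val p.1 p.2).factorial * (ab.2.val p.1 p.2).factorial : ℕ) : ℝ) : ℂ)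
              * PhiL ab.1.val ab.2.val (fun j => (A j : Matrix (Fin 2) (Fin 2) ℂ)))
          S ∧
        S ^ 2 *
          Matrix.det
            ((1 : Matrix (Fin l × Fin 2) (Fin l × Fin 2) ℂ) -
              blockDiagU (fun j => (A j : Matrix (Fin 2) (Fin 2) ℂ)) * blockT t *
                (blockDiagU (fun j => (A j : Matrix (Fin 2) (Fin 2) ℂ))).transpose *
                blockT t')
          = 1 := by
  obtain ⟨ε, hε, H⟩ := generating_function_multi_general l fun j => (A j : Matrix _ _ ℂ)
  refine ⟨ε, hε, fun t t' ht ht' hbound hbound' => ?_⟩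
  simpa [blockT_eq_symplecticBlock] using H (t.map Complex.ofReal) (t'.map Complex.ofReal)
    (by rw [← transpose_map, ht]; ext; simp) (by rw [← transpose_map, ht']; ext; simp)
    (by simpa using hbound) (by simpa using hbound')
end
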